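/- Assume the Extended Riemann Hypothesis. Then for every ε > 0 there exists N such that for all n ≥ N, every nontrivial monotone decreasing graph property P_n of n-vertex graphs in which every graph has at most n^{5/4−ε} edges is evasive. -/

import Mathlib

/-- A deterministic decision tree over a set of Boolean variables indexed by `ι`. -/
inductive DecisionTree (ι : Type) : Type
  | leaf : Bool → DecisionTree ι
  | node : ι → DecisionTree ι → DecisionTree ι → DecisionTree ι

namespace DecisionTree

/-- Evaluate a decision tree on an input assignment. -/
def eval {ι : Type} : DecisionTree ι → (ι → Bool) → Bool
  | leaf b, _ => b
  | node i t f, x => if x i then t.eval x else f.eval x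

/-- The depth (worst-case number of queries) of a decision tree. -/
def depth {ι : Type} : DecisionTree ι → ℕ
  | leaf _ => 0
  | node _ t f => max t.depth f.depth + 1

end DecisionTree

/-- The variables of a graph property on `n` vertices: pairs `i < j`. -/
def EdgeVar (n : ℕ) := {p : Fin n × Fin n // p.1 < p.2}

/-- The graph on `Fin n` determined by an assignment to the adjacency variables. -/
def graphOfInput {n : ℕ} (x : EdgeVar n → Bool) : SimpleGraph (Fin n) :=
  SimpleGraph.fromRel (fun i j => ∃ h : i < j, x ⟨(i, j), h⟩ = true)

/-- The deterministic query (decision-tree) complexity of a set of graphs on `Fin n`,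
viewed as a Boolean function of the adjacency variables. -/
noncomputable def queryComplexity {n : ℕ} (P : Set (SimpleGraph (Fin n))) : ℕ :=
  sInf {d | ∃ T : DecisionTree (EdgeVar n),
    (∀ x, T.eval x = true ↔ graphOfInput x ∈ P) ∧ T.depth ≤ d}

/-- A set of graphs on `Fin n` is evasive if its query complexity is `n(n-1)/2`,
the total number of adjacency variables. -/
def Evasive {n : ℕ} (P : Set (SimpleGraph (Fin n))) : Prop :=
  queryComplexity P = n * (n - 1) / 2

/-- `G` contains a (not necessarily induced) subgraph isomorphic to `H`. -/
def ContainsCopy {V : Type} (H : SimpleGraph V) {W : Type} (G : SimpleGraph W) : Prop :=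
  ∃ f : V → W, Function.Injective f ∧ ∀ v w : V, H.Adj v w → G.Adj (f v) (f w)

/-- The forbidden-subgraph property `Q_n^H`: graphs on `Fin n` containing no copy of `H`. -/
def ForbiddenSubgraphProperty {V : Type} (H : SimpleGraph V) (n : ℕ) :
    Set (SimpleGraph (Fin n)) :=
  {G | ¬ ContainsCopy H G}

/-- A prime `p` is an `ε`-near Fermat prime if `2^s ∣ p - 1` and `(p-1)/2^s ≤ p^ε`
for some `s ≥ 0`. -/
def NearFermatPrime (ε : ℝ) (p : ℕ) : Prop :=
  p.Prime ∧ ∃ s : ℕ, 2 ^ s ∣ p - 1 ∧ (((p - 1) / 2 ^ s : ℕ) : ℝ) ≤ (p : ℝ) ^ ε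

/-- A set of graphs on `Fin n` is a (labelled-vertex-invariant) graph property if it is
invariant under relabeling of the vertices. -/
def IsGraphProperty {n : ℕ} (P : Set (SimpleGraph (Fin n))) : Prop :=
  ∀ σ : Equiv.Perm (Fin n), ∀ G : SimpleGraph (Fin n),
    G ∈ P → G.map σ.toEmbedding ∈ P

/-- A set of graphs is monotone decreasing if it is closed under deletion of edges. -/
def MonotoneDecreasing {n : ℕ} (P : Set (SimpleGraph (Fin n))) : Prop :=
  ∀ G G' : SimpleGraph (Fin n), G' ≤ G → G ∈ P → G' ∈ P

/-- The Extended Riemann Hypothesis: every zero of every Dirichlet `L`-function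
in the critical strip lies on the critical line. -/
def ExtendedRiemannHypothesis : Prop :=
  ∀ (N : ℕ) [NeZero N] (χ : DirichletCharacter ℂ N) (s : ℂ),
    0 < s.re → s.re < 1 → DirichletCharacter.LFunction χ s = 0 → s.re = 1 / 2

/-! Suppose that `P` is not evasive. A decision tree saving a query shows that the order complex of
the nonempty graphs in `P`, the barycentric subdivision of the simplicial complex `P`, is acyclic.
Write `n = k * p + r` with `k < r` and `p`, `r` prime, and split the vertices into `k` blocks
`ZMod p` and a block `ZMod r`. The translations of the small blocks form a `p`-group; a rotation of
the blocks, twisted by a generator of the units of `ZMod p`, and the translation of the large block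
together generate a cyclic group above it; and a unit of `ZMod r` of prime order `q ∣ r - 1` acts
on top. For a group with these three layers, Oliver's theorem (Smith theory for the `p`-group, the
Lefschetz number for the cyclic quotient, counting modulo `q` for the last) gives a nonempty graph
in `P` that is invariant. It has an edge, hence the whole orbit of that edge, and every orbit has at
least `min (r * q) (k * p * (p - 1)) / 2` elements.

It remains to choose `p < q` close to `n ^ (1 / 4)` and `r` close to `n` in a residue class modulo
`p * q`. High derivatives of the logarithmic derivative of the `L`-functions at a real point `D + 1`
weight a prime `x` in the class by `(log x) ^ k * x ^ (-D)` relative to the harmonic density, which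
is concentrated at `log x = k / D`; under the extended Riemann hypothesis they are controlled by
their values on a disc reaching almost to the line of real part `1 / 2`. -/

/-! ### Order complexes -/

namespace OrderComplex

section Chain

variable {α : Type*} [PartialOrder α] {S T : Set α} {c d : Finset α}

/-- The simplices of the order complex of `S`: the finite chains of elements of `S`. The empty
chain is included, so that homology is reduced. -/
def IsChainIn (S : Set α) (c : Finset α) : Prop :=
  (∀ a ∈ c, a ∈ S) ∧ IsChain (· ≤ ·) (c : Set α)

noncomputable instance (S : Set α) : DecidablePred (IsChainIn S) := Classical.decPred _

lemma IsChainIn.subset (h : IsChainIn S d) (hcd : c ⊆ d) : IsChainIn S c :=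
  ⟨fun a ha => h.1 a (hcd ha), h.2.mono (by exact_mod_cast hcd)⟩

lemma IsChainIn.mono (h : IsChainIn S c) (hST : S ⊆ T) : IsChainIn T c :=
  ⟨fun a ha => hST (h.1 a ha), h.2⟩

lemma IsChainIn.inter (hS : IsChainIn S c) (hT : IsChainIn T c) : IsChainIn (S ∩ T) c :=
  ⟨fun a ha => ⟨hS.1 a ha, hT.1 a ha⟩, hS.2⟩

lemma IsChainIn.lt_or_gt (h : IsChainIn S c) {a b : α} (ha : a ∈ c) (hb : b ∈ c) (hab : a ≠ b) :
    a < b ∨ b < a :=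
  (h.2 ha hb hab).imp (lt_of_le_of_ne · hab) (lt_of_le_of_ne · hab.symm)

lemma IsChainIn.insert [DecidableEq α] (h : IsChainIn S c) {e : α} (he : e ∈ S)
    (hcomp : ∀ a ∈ S, a ≤ e ∨ e ≤ a) : IsChainIn S (insert e c) := by
  refine ⟨by simpa [he] using h.1, ?_⟩
  rw [Finset.coe_insert]
  exact h.2.insert fun b hb _ => (hcomp b (h.1 b hb)).symm

end Chain

section Sign

variable {α : Type*} [PartialOrder α] {K : Type*} [CommRing K] {a b : α} {c : Finset α}

open scoped Classical in
/-- The sign with which the simplex `c` occurs in the boundary of the chain `insert a c`: the parity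
of the position of `a` in that chain. -/
noncomputable def sgn (K : Type*) [CommRing K] (a : α) (c : Finset α) : K :=
  (-1) ^ (c.filter (· < a)).card

lemma sgn_mul_self (a : α) (c : Finset α) : sgn K a c * sgn K a c = 1 := by
  rw [sgn, ← mul_pow, neg_one_mul, neg_neg, one_pow]

variable [DecidableEq α]

lemma sgn_insert_of_lt (ha : a ∉ c) (h : a < b) : sgn K b (insert a c) = -sgn K b c := by
  classical
  simp [sgn, Finset.filter_insert, h, ha, pow_succ]

lemma sgn_insert_of_not_lt (h : ¬ a < b) : sgn K b (insert a c) = sgn K b c := by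
  classical
  simp [sgn, Finset.filter_insert, h]

lemma sgn_mul_sgn_insert (ha : a ∉ c) (hb : b ∉ c) (h : a < b ∨ b < a) :
    sgn K a c * sgn K b (insert a c) = -(sgn K b c * sgn K a (insert b c)) := by
  rcases h with h | h
  · rw [sgn_insert_of_lt ha h, sgn_insert_of_not_lt h.not_gt]
    ring
  · rw [sgn_insert_of_lt hb h, sgn_insert_of_not_lt h.not_gt]
    ring

lemma sgn_mul_sgn_insert' (ha : a ∉ c) (hb : b ∉ c) (h : a < b ∨ b < a) :
    sgn K a (insert b c) * sgn K b (insert a c) = -(sgn K b c * sgn K a c) := by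
  rcases h with h | h
  · rw [sgn_insert_of_lt ha h, sgn_insert_of_not_lt h.not_gt]
    ring
  · rw [sgn_insert_of_lt hb h, sgn_insert_of_not_lt h.not_gt]
    ring

end Sign

section Boundary

variable {α : Type*} [PartialOrder α] {K : Type*} [CommRing K] {S T : Set α} {f : Finset α → K}

/-- The augmented chains of the order complex of `S`, as functions vanishing off its simplices. All
dimensions are collected in one module, a simplex `c` having dimension `c.card - 1`. -/
def chains (K : Type*) [CommRing K] (S : Set α) : Submodule K (Finset α → K) where
  carrier := {f | ∀ c, ¬ IsChainIn S c → f c = 0}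
  add_mem' hf hg c hc := by simp [hf c hc, hg c hc]
  zero_mem' c _ := rfl
  smul_mem' r f hf c hc := by simp [hf c hc]

lemma chains_mono (hST : S ⊆ T) : chains K S ≤ chains K T :=
  fun _ hf c hc => hf c fun h => hc (h.mono hST)

lemma exists_add_eq_of_mem_chains_union {U W : Set α} {z : Finset α → K}
    (hz : z ∈ chains K (U ∪ W))
    (hc : ∀ c : Finset α, IsChainIn (U ∪ W) c → IsChainIn U c ∨ IsChainIn W c) :
    ∃ u ∈ chains K U, ∃ w ∈ chains K W, u + w = z := by
  classical
  refine ⟨fun c => if IsChainIn U c then z c else 0, fun c hcU => if_neg hcU,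
    fun c => if IsChainIn U c then 0 else z c, fun c hcW => ?_, ?_⟩
  · by_cases hcU : IsChainIn U c
    · exact if_pos hcU
    · exact (if_neg hcU).trans (hz c fun h => (hc c h).elim hcU hcW)
  · ext c
    by_cases hcU : IsChainIn U c <;> simp [hcU]

variable [Fintype α] [DecidableEq α]

/-- The augmented boundary operator. The signs are those of the order complex, so the square of
this operator vanishes only on functions supported on chains. -/
noncomputable def bdry (K : Type*) [CommRing K] : (Finset α → K) →ₗ[K] (Finset α → K) where
  toFun f c := ∑ a ∈ cᶜ, sgn K a c * f (insert a c)
  map_add' f g := by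
    ext c
    simp [mul_add, Finset.sum_add_distrib]
  map_smul' r f := by
    ext c
    simp [Finset.mul_sum, mul_left_comm]

lemma bdry_apply (f : Finset α → K) (c : Finset α) :
    bdry K f c = ∑ a ∈ cᶜ, sgn K a c * f (insert a c) := rfl

lemma bdry_mem_chains (hf : f ∈ chains K S) : bdry K f ∈ chains K S := fun c hc => by
  refine Finset.sum_eq_zero fun a _ => ?_
  rw [hf _ fun h => hc (h.subset (Finset.subset_insert _ _)), mul_zero]

lemma bdry_bdry (hf : f ∈ chains K S) : bdry K (bdry K f) = 0 := by
  ext c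
  simp only [bdry_apply, Finset.mul_sum, Pi.zero_apply]
  rw [Finset.sum_sigma']
  have distinct : ∀ x ∈ cᶜ.sigma fun a => (insert a c)ᶜ, x.1 ∉ c ∧ x.2 ≠ x.1 ∧ x.2 ∉ c := by
    simp
  refine Finset.sum_involution (fun x _ => ⟨x.2, x.1⟩) ?_ ?_ ?_ fun _ _ => rfl
  · rintro ⟨a, b⟩ hx
    obtain ⟨ha, hba, hb⟩ := distinct _ hx
    dsimp only at ha hba hb ⊢
    rw [Finset.insert_comm a b c]
    by_cases hc : IsChainIn S (insert b (insert a c))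
    · have hlt := hc.lt_or_gt (a := a) (b := b) (by simp) (by simp) hba.symm
      rw [← mul_assoc, ← mul_assoc, sgn_mul_sgn_insert ha hb hlt]
      ring
    · rw [hf _ hc]
      simp
  · exact fun x hx _ heq => (distinct x hx).2.1 (congrArg Sigma.fst heq)
  · intro x hx
    obtain ⟨ha, hba, hb⟩ := distinct x hx
    simpa using ⟨hb, hba.symm, ha⟩

/-- The order complex of `S` has vanishing reduced homology with coefficients in `K`. In particular
it is nonempty, since the empty chain has to be a boundary. -/
def Acyclic (K : Type*) [CommRing K] (S : Set α) : Prop :=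
  ∀ f ∈ chains K S, bdry K f = 0 → ∃ h ∈ chains K S, bdry K h = f

end Boundary

section Cone

variable {α : Type*} [PartialOrder α] [DecidableEq α] {K : Type*} [CommRing K] {S : Set α} {e : α}
  {f : Finset α → K}

/-- The join of a chain with the vertex `e`, which is a contracting homotopy as soon as `e` is
comparable to all the vertices involved. -/
noncomputable def cone (e : α) (f : Finset α → K) : Finset α → K :=
  fun c => if e ∈ c then sgn K e (c.erase e) * f (c.erase e) else 0

lemma cone_of_notMem {c : Finset α} (he : e ∉ c) : cone e f c = 0 := if_neg he

lemma cone_insert {c : Finset α} (he : e ∉ c) : cone e f (insert e c) = sgn K e c * f c := by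
  simp [cone, he]

lemma cone_mem_chains (hf : f ∈ chains K S) (he : e ∈ S) (hcomp : ∀ a ∈ S, a ≤ e ∨ e ≤ a) :
    cone e f ∈ chains K S := fun c hc => by
  by_cases hec : e ∈ c
  · rw [cone, if_pos hec, hf, mul_zero]
    exact fun h => hc (Finset.insert_erase hec ▸ h.insert he hcomp)
  · exact cone_of_notMem hec

variable [Fintype α]

lemma bdry_cone_add_cone_bdry (hf : f ∈ chains K S) (hcomp : ∀ a ∈ S, a ≤ e ∨ e ≤ a) :
    bdry K (cone e f) + cone e (bdry K f) = f := by
  ext c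
  rw [Pi.add_apply]
  by_cases hec : e ∈ c
  · obtain ⟨d, hed, rfl⟩ : ∃ d, e ∉ d ∧ insert e d = c :=
      ⟨c.erase e, Finset.notMem_erase e c, Finset.insert_erase hec⟩
    have cancel : ∀ a ∈ (insert e d)ᶜ, sgn K a (insert e d) * cone e f (insert a (insert e d)) =
        -sgn K e d * (sgn K a d * f (insert a d)) := by
      intro a ha
      simp only [Finset.mem_compl, Finset.mem_insert, not_or] at ha
      rw [Finset.insert_comm, cone_insert (by simp [Ne.symm ha.1, hed])]
      by_cases hch : IsChainIn S (insert a d)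
      · have hlt : a < e ∨ e < a :=
          (hcomp a (hch.1 a (by simp))).imp (lt_of_le_of_ne · ha.1)
            (lt_of_le_of_ne · (Ne.symm ha.1))
        linear_combination f (insert a d) * sgn_mul_sgn_insert' (K := K) ha.2 hed hlt
      · rw [hf _ hch]
        simp
    have expand : bdry K f d = sgn K e d * f (insert e d) +
        ∑ a ∈ (insert e d)ᶜ, sgn K a d * f (insert a d) := by
      rw [bdry_apply, ← Finset.add_sum_erase _ _ (Finset.mem_compl.2 hed), ← Finset.compl_insert]
    rw [bdry_apply, Finset.sum_congr rfl cancel, ← Finset.mul_sum, cone_insert hed, expand]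
    linear_combination f (insert e d) * sgn_mul_self (K := K) e d
  · rw [cone_of_notMem hec, add_zero, bdry_apply, Finset.sum_eq_single e]
    · rw [cone_insert hec, ← mul_assoc, sgn_mul_self, one_mul]
    · intro a _ hae
      rw [cone_of_notMem (by simp [hec, Ne.symm hae]), mul_zero]
    · exact fun h => absurd (Finset.mem_compl.2 hec) h

lemma acyclic_of_comparable (he : e ∈ S) (hcomp : ∀ a ∈ S, a ≤ e ∨ e ≤ a) : Acyclic K S := by
  refine fun f hf hdf => ⟨cone e f, cone_mem_chains hf he hcomp, ?_⟩
  have hzero : cone e (0 : Finset α → K) = 0 := by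
    ext
    simp [cone]
  simpa [hdf, hzero] using bdry_cone_add_cone_bdry hf hcomp

end Cone

section MayerVietoris

variable {α : Type*} [PartialOrder α] [Fintype α] [DecidableEq α] {K : Type*} [CommRing K]
  {S U W : Set α}

lemma Acyclic.union (hU : Acyclic K U) (hW : Acyclic K W) (hUW : Acyclic K (U ∩ W))
    (hc : ∀ c : Finset α, IsChainIn (U ∪ W) c → IsChainIn U c ∨ IsChainIn W c) :
    Acyclic K (U ∪ W) := by
  intro z hz hdz
  obtain ⟨u, hu, w, hw, rfl⟩ := exists_add_eq_of_mem_chains_union hz hc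
  have hdu : bdry K u = -bdry K w := eq_neg_of_add_eq_zero_left (by rw [← map_add, hdz])
  have hdu_mem : bdry K u ∈ chains K (U ∩ W) := fun c hcUW => by
    by_cases hcU : IsChainIn U c
    · have hcW : ¬ IsChainIn W c := fun hcW => hcUW (hcU.inter hcW)
      rw [hdu, Pi.neg_apply, bdry_mem_chains hw c hcW, neg_zero]
    · exact bdry_mem_chains hu c hcU
  obtain ⟨v, hv, hdv⟩ := hUW _ hdu_mem (bdry_bdry hu)
  obtain ⟨u', hu', hdu'⟩ := hU (u - v) (sub_mem hu (chains_mono Set.inter_subset_left hv))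
    (by rw [map_sub, hdv, sub_self])
  obtain ⟨w', hw', hdw'⟩ := hW (w + v) (add_mem hw (chains_mono Set.inter_subset_right hv))
    (by rw [map_add, hdv, hdu, add_neg_cancel])
  refine ⟨u' + w', add_mem (chains_mono Set.subset_union_left hu')
    (chains_mono Set.subset_union_right hw'), ?_⟩
  rw [map_add, hdu', hdw']
  abel

lemma Acyclic.insert {a : α} (hS : Acyclic K S) (ha : a ∉ S)
    (hlink : Acyclic K {b ∈ S | b ≤ a ∨ a ≤ b}) : Acyclic K (insert a S) := by
  set star : Set α := Insert.insert a {b ∈ S | b ≤ a ∨ a ≤ b} with star_def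
  have hunion : Insert.insert a S = S ∪ star := by
    ext b
    simp only [star_def, Set.mem_insert_iff, Set.mem_union, Set.mem_ofPred_eq]
    tauto
  have hinter : S ∩ star = {b ∈ S | b ≤ a ∨ a ≤ b} := by
    rw [star_def, Set.inter_insert_of_notMem ha]
    exact Set.inter_eq_right.2 (Set.sep_subset _ _)
  have hstar : Acyclic K star := by
    refine acyclic_of_comparable (e := a) (Set.mem_insert _ _) ?_
    rintro b (rfl | hb)
    exacts [Or.inl le_rfl, hb.2]
  rw [hunion]
  refine hS.union hstar (hinter ▸ hlink) fun c hc => ?_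
  rw [← hunion] at hc
  by_cases hac : a ∈ c
  · refine Or.inr ⟨fun b hb => ?_, hc.2⟩
    by_cases hba : b = a
    · exact Or.inl hba
    · exact Or.inr ⟨(hc.1 b hb).resolve_left hba, hc.2 hb hac hba⟩
  · exact Or.inl ⟨fun b hb => (hc.1 b hb).resolve_left fun h => hac (h ▸ hb), hc.2⟩

end MayerVietoris

end OrderComplex

/-! ### Smith theory -/

namespace OrderComplex

section Pullback

variable {α β : Type*} [PartialOrder α] [PartialOrder β] {K : Type*} [CommRing K]

/-- Pullback of functions on finite sets along an order isomorphism. -/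
def pull (K : Type*) [CommRing K] (e : α ≃o β) : (Finset β → K) →ₗ[K] (Finset α → K) :=
  LinearMap.funLeft K K fun c => c.map e.toEquiv.toEmbedding

lemma pull_apply (e : α ≃o β) (f : Finset β → K) (c : Finset α) :
    pull K e f c = f (c.map e.toEquiv.toEmbedding) := rfl

lemma pull_mul (e : α ≃o β) (f g : Finset β → K) : pull K e (f * g) = pull K e f * pull K e g :=
  rfl

lemma sgn_map (e : α ≃o β) (a : α) (c : Finset α) :
    sgn K (e a) (c.map e.toEquiv.toEmbedding) = sgn K a c := by
  classical
  simp [sgn, Finset.filter_map]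

lemma isChainIn_map (e : α ≃o β) {T : Set β} {c : Finset α} :
    IsChainIn T (c.map e.toEquiv.toEmbedding) ↔ IsChainIn (e ⁻¹' T) c := by
  refine and_congr (Finset.forall_mem_map (p := fun b _ => b ∈ T)) ?_
  simp only [Finset.coe_map, IsChain, Set.Pairwise, Set.forall_mem_image, Equiv.coe_toEmbedding,
    RelIso.coe_fn_toEquiv, e.le_iff_le, e.injective.ne_iff]

lemma pull_mem_chains (e : α ≃o β) {T : Set β} {f : Finset β → K} (hf : f ∈ chains K T) :
    pull K e f ∈ chains K (e ⁻¹' T) :=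
  fun _ hc => hf _ fun h => hc ((isChainIn_map e).1 h)

variable [Fintype α] [DecidableEq α] [Fintype β] [DecidableEq β]

lemma bdry_pull (e : α ≃o β) (f : Finset β → K) : bdry K (pull K e f) = pull K e (bdry K f) := by
  ext c
  simp only [pull_apply, bdry_apply]
  refine Finset.sum_equiv e.toEquiv (fun a => by simp) fun a _ => ?_
  rw [Finset.map_insert]
  exact congrArg (· * _) (sgn_map e a c).symm

lemma Acyclic.preimage (e : α ≃o β) {T : Set β} (hT : Acyclic K T) : Acyclic K (e ⁻¹' T) := by
  intro f hf hdf
  have hpull (g : Finset α → K) : pull K e (pull K e.symm g) = g := by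
    ext c
    refine congrArg g ?_
    ext a
    simp
  have hf' : pull K e.symm f ∈ chains K T := by
    simpa [← Set.preimage_comp, Function.comp_def] using pull_mem_chains e.symm hf
  obtain ⟨h, hh, hdh⟩ := hT _ hf' (by rw [bdry_pull, hdf, map_zero])
  exact ⟨pull K e h, pull_mem_chains e hh, by rw [bdry_pull, hdh, hpull]⟩

end Pullback

section Automorphism

open scoped Pointwise
open MulAction

variable {α : Type*} [PartialOrder α] {K : Type*} [CommRing K] {S : Set α} {e : α ≃o α} {p : ℕ}
  {f : Finset α → K}

lemma pull_one : pull K (1 : α ≃o α) = 1 :=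
  LinearMap.ext fun f => funext fun _ => congrArg f Finset.map_refl

lemma pull_pow (e : α ≃o α) (j : ℕ) : pull K e ^ j = pull K (e ^ j) := by
  induction j with
  | zero => simp [pull_one]
  | succ j ih =>
    rw [pow_succ', ih, pow_succ]
    exact LinearMap.ext fun f => funext fun c => congrArg f (Finset.map_map ..)

lemma preimage_eq_of_mem_stabilizer (he : e ∈ stabilizer (α ≃o α) S) : e ⁻¹' S = S :=
  Set.ext (mem_stabilizer_set.1 he)

lemma pull_mem_chains_of_mem_stabilizer (he : e ∈ stabilizer (α ≃o α) S) (hf : f ∈ chains K S) :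
    pull K e f ∈ chains K S :=
  (preimage_eq_of_mem_stabilizer he).subst (motive := fun T => pull K e f ∈ chains K T)
    (pull_mem_chains e hf)

lemma apply_eq_of_comparable [Finite α] (e : α ≃o α) {a : α} (h : e a ≤ a ∨ a ≤ e a) :
    e a = a := by
  have not_lt_apply : ∀ g : α ≃o α, ¬ a < g a := fun g h =>
    not_injective_infinite_finite _ (g.strictMono.strictMono_iterate_of_lt_map h).injective
  by_contra hne
  rcases h with h | h
  · exact not_lt_apply e.symm (by simpa using e.symm.strictMono (lt_of_le_of_ne h hne))
  · exact not_lt_apply e (lt_of_le_of_ne h (Ne.symm hne))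

/-- The operator `1 + e + ⋯ + e ^ (p - 1)` on functions on finite sets. -/
def pullSum (K : Type*) [CommRing K] (e : α ≃o α) (p : ℕ) : Module.End K (Finset α → K) :=
  ∑ j ∈ Finset.range p, pull K e ^ j

lemma pullSum_apply (p : ℕ) (f : Finset α → K) :
    pullSum K e p f = ∑ j ∈ Finset.range p, pull K (e ^ j) f := by
  simp only [pullSum, pull_pow, LinearMap.sum_apply]

lemma pullSum_mem_chains (he : e ∈ stabilizer (α ≃o α) S) (hf : f ∈ chains K S) :
    pullSum K e p f ∈ chains K S := by
  rw [pullSum_apply]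
  exact sum_mem fun j _ => pull_mem_chains_of_mem_stabilizer (pow_mem he j) hf

lemma commute_pull_bdry [Fintype α] [DecidableEq α] (e : α ≃o α) :
    Commute (pull K e) (bdry K) :=
  LinearMap.ext fun f => (bdry_pull e f).symm

lemma commute_pullSum [Fintype α] [DecidableEq α] (e : α ≃o α) (p : ℕ) :
    Commute (pullSum K e p) (bdry K) :=
  Commute.sum_left _ _ _ fun j _ => (commute_pull_bdry e).pow_left j

lemma one_sub_pull_mul_pullSum (he : e ^ p = 1) : (1 - pull K e) * pullSum K e p = 0 := by
  rw [pullSum, mul_neg_geom_sum, pull_pow, he, pull_one, sub_self]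

lemma pullSum_mul_one_sub_pull (he : e ^ p = 1) : pullSum K e p * (1 - pull K e) = 0 := by
  rw [pullSum, geom_sum_mul_neg, pull_pow, he, pull_one, sub_self]

variable [DecidableEq α]

lemma pull_apply_smul (e : α ≃o α) (f : Finset α → K) (c : Finset α) :
    pull K e f c = f (e • c) := by
  rw [pull_apply, Finset.map_eq_image]
  rfl

lemma isChainIn_fixed_iff [Finite α] {c : Finset α} :
    IsChainIn {a ∈ S | e a = a} c ↔ IsChainIn S c ∧ e • c = c := by
  constructor
  · intro h
    refine ⟨h.mono fun a ha => ha.1, ?_⟩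
    exact (Finset.image_congr fun a ha => (h.1 a ha).2).trans Finset.image_id
  · rintro ⟨h, hc⟩
    refine ⟨fun a ha => ⟨h.1 a ha, ?_⟩, h.2⟩
    have hea : e a ∈ c := hc ▸ Finset.smul_mem_smul_finset ha
    by_contra hne
    exact hne (apply_eq_of_comparable e (h.2 hea ha hne))

/-- The part of a chain supported on the simplices fixed by `e`. -/
noncomputable def fixPart (e : α ≃o α) (f : Finset α → K) : Finset α → K :=
  Set.indicator {c | e • c = c} f

lemma fixPart_apply_of_smul_eq {c : Finset α} (hc : e • c = c) : fixPart e f c = f c :=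
  Set.indicator_of_mem hc f

lemma fixPart_apply_of_smul_ne {c : Finset α} (hc : e • c ≠ c) : fixPart e f c = 0 :=
  Set.indicator_of_notMem hc f

lemma fixPart_add (f g : Finset α → K) : fixPart e (f + g) = fixPart e f + fixPart e g :=
  Set.indicator_add' _ f g

lemma fixPart_sub (f g : Finset α → K) : fixPart e (f - g) = fixPart e f - fixPart e g :=
  Set.indicator_sub' _ f g

lemma fixPart_mem_chains [Finite α] (hf : f ∈ chains K S) :
    fixPart e f ∈ chains K {a ∈ S | e a = a} := fun c hc => by
  by_cases h : e • c = c
  · rw [fixPart_apply_of_smul_eq h]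
    exact hf c fun h' => hc (isChainIn_fixed_iff.2 ⟨h', h⟩)
  · exact fixPart_apply_of_smul_ne h

lemma fixPart_eq_self [Finite α] (hf : f ∈ chains K {a ∈ S | e a = a}) : fixPart e f = f :=
  Set.indicator_eq_self.2 fun c hc => by
    by_contra h
    exact hc (hf c fun h' => h (isChainIn_fixed_iff.1 h').2)

lemma fixPart_pull (e : α ≃o α) (f : Finset α → K) : fixPart e (pull K e f) = fixPart e f := by
  ext c
  by_cases hc : e • c = c
  · simp only [fixPart_apply_of_smul_eq hc, pull_apply_smul, hc]
  · simp only [fixPart_apply_of_smul_ne hc]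

lemma pull_fixPart (e : α ≃o α) (f : Finset α → K) : pull K e (fixPart e f) = fixPart e f := by
  ext c
  rw [pull_apply_smul]
  by_cases hc : e • c = c
  · rw [hc]
  · rw [fixPart_apply_of_smul_ne hc, fixPart_apply_of_smul_ne (by simpa using hc)]

lemma fixPart_pullSum [CharP K p] (f : Finset α → K) : fixPart e (pullSum K e p f) = 0 := by
  ext c
  by_cases hc : e • c = c
  · have hpow (j : ℕ) : e ^ j • c = c := pow_mem (mem_stabilizer_iff.2 hc) j
    simp [fixPart_apply_of_smul_eq hc, pullSum_apply, pull_apply_smul, hpow]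
  · exact fixPart_apply_of_smul_ne hc

lemma pullSum_fixPart [CharP K p] (f : Finset α → K) : pullSum K e p (fixPart e f) = 0 := by
  have hpow (j : ℕ) : (pull K e ^ j) (fixPart e f) = fixPart e f := by
    induction j with
    | zero => rfl
    | succ j ih => rw [pow_succ', Module.End.mul_apply, ih, pull_fixPart]
  ext c
  simp [pullSum, hpow]

end Automorphism

section Transversal

open MulAction

variable {G X K : Type*} [Group G] [MulAction G X] [NonAssocSemiring K] {g : G} {p : ℕ}

lemma period_eq_of_smul_ne (hp : p.Prime) (hg : g ^ p = 1) {x : X} (hx : g • x ≠ x) :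
    period g x = p := by
  refine ((Nat.dvd_prime hp).1 (pow_smul_eq_iff_period_dvd.1 (by rw [hg, one_smul]))).resolve_left
    fun h => hx ?_
  simpa [h] using pow_period_smul g x

lemma exists_sum_range_eq_one_of_smul_ne (hp : p.Prime) (hg : g ^ p = 1) :
    ∃ R : X → K, ∀ x, g • x ≠ x → ∑ j ∈ Finset.range p, R (g ^ j • x) = 1 := by
  classical
  let rep : X → X := fun x => (Quotient.mk (orbitRel (Subgroup.zpowers g) X) x).out
  have rep_mem (x : X) : rep x ∈ orbit (Subgroup.zpowers g) x :=
    orbitRel_apply.1 (Quotient.exact (Quotient.out_eq _))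
  have rep_pow (x : X) (j : ℕ) : rep (g ^ j • x) = rep x :=
    congrArg Quotient.out (Quotient.sound (orbitRel_apply.2
      ⟨⟨g ^ j, Subgroup.npow_mem_zpowers g j⟩, rfl⟩))
  refine ⟨fun x => if x = rep x then 1 else 0, fun x hx => ?_⟩
  have hper : period g x = p := period_eq_of_smul_ne hp hg hx
  have hinj : Set.InjOn (fun j : ℕ => g ^ j • x) (Set.Iio p) := fun i hi j hj hij => by
    rw [← hper] at hi hj
    exact Function.iterate_injOn_Iio_minimalPeriod (f := (g • ·)) hi hj
      (by simpa only [smul_iterate] using hij)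
  obtain ⟨i, hip, hi⟩ : ∃ i < p, g ^ i • x = rep x := by
    obtain ⟨⟨_, k, rfl⟩, hk⟩ := rep_mem x
    refine ⟨(k % p).toNat, ?_, ?_⟩
    · rw [Int.toNat_lt (Int.emod_nonneg k (mod_cast hp.ne_zero))]
      exact Int.emod_lt_of_pos k (Int.natCast_pos.2 hp.pos)
    · rw [← hk, ← zpow_natCast, Int.toNat_of_nonneg (Int.emod_nonneg k (mod_cast hp.ne_zero)),
        ← zpow_eq_zpow_emod' k hg]
      rfl
  rw [Finset.sum_eq_single_of_mem i (Finset.mem_range.2 hip)]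
  · exact if_pos (by rw [rep_pow, hi])
  · intro j hj hji
    refine if_neg fun h => hji (hinj (Finset.mem_range.1 hj) hip ?_)
    rwa [rep_pow, ← hi] at h

end Transversal

section Smith

open scoped Pointwise
open MulAction

variable {α : Type*} [PartialOrder α] {K : Type*} [CommRing K] {S : Set α} {e : α ≃o α} {n p : ℕ}
  {ρ ρ' : Module.End K (Finset α → K)}

/-- Functions supported on sets with at least `n` elements, which on chains means in dimensions at
least `n - 1`. -/
def supportedFrom (K : Type*) [CommRing K] (α : Type*) (n : ℕ) : Submodule K (Finset α → K) where
  carrier := {f | ∀ c, c.card < n → f c = 0}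
  add_mem' hf hg c hc := by simp [hf c hc, hg c hc]
  zero_mem' _ _ := rfl
  smul_mem' r f hf c hc := by simp [hf c hc]

lemma mul_mem_chains (R : Finset α → K) {f : Finset α → K} (hf : f ∈ chains K S) :
    R * f ∈ chains K S :=
  fun c hc => by simp [hf c hc]

lemma pullSum_mul (R : Finset α → K) {f : Finset α → K} (hf : pull K e f = f) :
    pullSum K e p (R * f) = pullSum K e p R * f := by
  have hpow (j : ℕ) : (pull K e ^ j) f = f := by
    induction j with
    | zero => rfl
    | succ j ih => rw [pow_succ', Module.End.mul_apply, ih, hf]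
  rw [pullSum_apply, pullSum_apply, Finset.sum_mul]
  exact Finset.sum_congr rfl fun j _ => by rw [pull_mul, ← pull_pow, hpow]

-- Summation by parts, with `W i = f + e f + ⋯ + e ^ (i - 1) f`.
lemma exists_sub_pull_eq_pullSum_mul (he : e ^ p = 1) (heS : e ∈ stabilizer (α ≃o α) S)
    (R : Finset α → K) {f : Finset α → K} (hf : f ∈ chains K S) (hNf : pullSum K e p f = 0) :
    ∃ h ∈ chains K S, h - pull K e h = pullSum K e p R * f := by
  have pull_pullSum (g : Finset α → K) : pull K e (pullSum K e p g) = pullSum K e p g :=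
    (sub_eq_zero.1 (LinearMap.congr_fun (one_sub_pull_mul_pullSum he) g)).symm
  let W (i : ℕ) := pullSum K e i f
  let F (i : ℕ) := (pull K e ^ i) R * W i
  have hW (i : ℕ) : pull K e (W i) = W (i + 1) - f := by
    simp [W, pullSum, Finset.sum_range_succ', pow_succ']
  have hF (i : ℕ) : F i - pull K e (F i) = F i - F (i + 1) + (pull K e ^ (i + 1)) R * f := by
    rw [pull_mul, hW, ← Module.End.mul_apply, ← pow_succ']
    ring
  refine ⟨∑ i ∈ Finset.range p, F i, sum_mem fun i _ =>
    mul_mem_chains _ (pullSum_mem_chains heS hf), ?_⟩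
  rw [map_sum, ← Finset.sum_sub_distrib, Finset.sum_congr rfl fun i _ => hF i,
    Finset.sum_add_distrib, Finset.sum_range_sub', ← Finset.sum_mul, ← pull_pullSum R]
  have hW_zero : W 0 = 0 := by simp [W, pullSum]
  have hW_p : W p = 0 := hNf
  simp [F, hW_zero, hW_p, pow_succ', pullSum]

lemma pull_mem_supportedFrom {f : Finset α → K} (hf : f ∈ supportedFrom K α n) :
    pull K e f ∈ supportedFrom K α n :=
  fun _ hc => hf _ (by rwa [Finset.card_map])

lemma exists_pullSum_mul_add_fixPart [Fact p.Prime] [CharP K p] [DecidableEq α] (he : e ^ p = 1) :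
    ∃ R, ∀ f : Finset α → K, pullSum K e p R * f + fixPart e f = f := by
  obtain ⟨R, hR⟩ := exists_sum_range_eq_one_of_smul_ne (X := Finset α) (K := K) Fact.out he
  refine ⟨R, fun f => funext fun c => ?_⟩
  by_cases hc : e • c = c
  · have hN : pullSum K e p R c = 0 := by
      rw [← fixPart_apply_of_smul_eq hc (f := pullSum K e p R), fixPart_pullSum, Pi.zero_apply]
    simp [hN, fixPart_apply_of_smul_eq hc]
  · have hN : pullSum K e p R c = 1 := by
      simp [pullSum_apply, pull_apply_smul, hR c hc]
    simp [hN, fixPart_apply_of_smul_ne hc]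

variable [Fintype α] [DecidableEq α]

lemma Acyclic.exists_bdry_eq_of_mem_supportedFrom (hS : Acyclic K S) {z : Finset α → K}
    (hz : z ∈ chains K S) (hzn : z ∈ supportedFrom K α n) (hdz : bdry K z = 0) :
    ∃ u ∈ chains K S, u ∈ supportedFrom K α (n + 1) ∧ bdry K u = z := by
  obtain ⟨u, hu, rfl⟩ := hS z hz hdz
  refine ⟨fun c => if c.card < n + 1 then 0 else u c, fun c hc => by simp [hu c hc],
    fun c hc => if_pos hc, ?_⟩
  ext c
  by_cases hcn : c.card < n
  · rw [hzn c hcn, bdry_apply]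
    refine Finset.sum_eq_zero fun a ha => ?_
    simp [Finset.card_insert_of_notMem (Finset.mem_compl.1 ha), hcn]
  · refine Finset.sum_congr rfl fun a ha => ?_
    simp [Finset.card_insert_of_notMem (Finset.mem_compl.1 ha), hcn]

/-- The properties that the operators `ρ = 1 - e` and `ρ' = 1 + e + ⋯ + e ^ (p - 1)`, or the same
two operators in the other order, have to satisfy for Smith theory to apply: on chains the kernel
of `ρ` is the direct sum of the image of `ρ'` and of the chains of fixed simplices. -/
structure SmithPair (S : Set α) (e : α ≃o α) (ρ ρ' : Module.End K (Finset α → K)) : Prop where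
  commute_bdry : Commute ρ (bdry K)
  commute_bdry' : Commute ρ' (bdry K)
  mem_chains : ∀ f ∈ chains K S, ρ f ∈ chains K S
  mem_supportedFrom : ∀ n, ∀ f ∈ supportedFrom K α n, ρ f ∈ supportedFrom K α n
  mul_eq_zero : ρ * ρ' = 0
  map_fixPart : ∀ f, ρ (fixPart e f) = 0
  fixPart_map : ∀ f, fixPart e (ρ' f) = 0
  exists_add_fixPart : ∀ f ∈ chains K S, ρ f = 0 → ∃ h ∈ chains K S, ρ' h + fixPart e f = f

/-- The complex `ρ (chains K S)` has no homology in dimensions at least `n - 1`. -/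
def ImageExactFrom (S : Set α) (ρ : Module.End K (Finset α → K)) (n : ℕ) : Prop :=
  ∀ y ∈ chains K S, ρ y ∈ supportedFrom K α n → bdry K (ρ y) = 0 →
    ∃ y' ∈ chains K S, bdry K (ρ y') = ρ y

lemma imageExactFrom_of_card_lt (hn : Fintype.card α < n) : ImageExactFrom S ρ n :=
  fun y _ hy _ => ⟨0, zero_mem _, by
    ext c
    rw [map_zero, map_zero, hy c (c.card_le_univ.trans_lt hn), Pi.zero_apply]⟩

namespace SmithPair

lemma exists_bdry_eq (H : SmithPair S e ρ ρ') (hS : Acyclic K S)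
    (hρ : ImageExactFrom S ρ (n + 1)) {z : Finset α → K} (hz : z ∈ chains K S)
    (hzn : z ∈ supportedFrom K α n) (hρz : ρ z = 0) (hdz : bdry K z = 0) :
    ∃ v ∈ chains K S, ρ v = 0 ∧ bdry K v = z := by
  have hcomm : ∀ f, ρ (bdry K f) = bdry K (ρ f) := LinearMap.congr_fun H.commute_bdry.eq
  obtain ⟨u, hu, hun, hdu⟩ := hS.exists_bdry_eq_of_mem_supportedFrom hz hzn hdz
  obtain ⟨y, hy, hyu⟩ := hρ u hu (H.mem_supportedFrom _ u hun) (by rw [← hcomm, hdu, hρz])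
  refine ⟨u - bdry K y, sub_mem hu (bdry_mem_chains hy), ?_, ?_⟩
  · rw [map_sub, hcomm, hyu, sub_self]
  · rw [map_sub, hdu, bdry_bdry hy, sub_zero]

lemma exists_bdry_add_bdry_fixPart (H : SmithPair S e ρ ρ') {v : Finset α → K}
    (hv : v ∈ chains K S) (hρv : ρ v = 0) :
    bdry K (fixPart e v) = fixPart e (bdry K v) ∧
      ∃ h ∈ chains K S, bdry K (ρ' h) + bdry K (fixPart e v) = bdry K v := by
  obtain ⟨h, hh, hv_eq⟩ := H.exists_add_fixPart v hv hρv
  have hcomm : ρ' (bdry K h) = bdry K (ρ' h) := LinearMap.congr_fun H.commute_bdry'.eq h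
  have hdv : bdry K (ρ' h) + bdry K (fixPart e v) = bdry K v := by rw [← map_add, hv_eq]
  refine ⟨?_, h, hh, hdv⟩
  rw [← hdv, fixPart_add, ← hcomm, H.fixPart_map, zero_add,
    fixPart_eq_self (bdry_mem_chains (fixPart_mem_chains hv))]

lemma imageExactFrom (H : SmithPair S e ρ ρ') (H' : SmithPair S e ρ' ρ) (hS : Acyclic K S)
    (hρ' : ImageExactFrom S ρ' (n + 1)) : ImageExactFrom S ρ n := by
  intro y hy hyn hdy
  obtain ⟨v, hv, hρv, hdv⟩ := H'.exists_bdry_eq hS hρ' (H.mem_chains y hy) hyn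
    (LinearMap.congr_fun H'.mul_eq_zero y) hdy
  obtain ⟨hfix, h, hh, hsum⟩ := H'.exists_bdry_add_bdry_fixPart hv hρv
  exact ⟨h, hh, by rwa [hfix, hdv, H'.fixPart_map, add_zero] at hsum⟩

lemma imageExactFrom_both (H : SmithPair S e ρ ρ') (H' : SmithPair S e ρ' ρ)
    (hS : Acyclic K S) (n : ℕ) : ImageExactFrom S ρ n ∧ ImageExactFrom S ρ' n := by
  obtain hn | _ := lt_or_ge (Fintype.card α) n
  · exact ⟨imageExactFrom_of_card_lt hn, imageExactFrom_of_card_lt hn⟩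
  · have ih := H.imageExactFrom_both H' hS (n + 1)
    exact ⟨H.imageExactFrom H' hS ih.2, H'.imageExactFrom H hS ih.1⟩
termination_by Fintype.card α + 1 - n

lemma acyclic_fixedPoints (H : SmithPair S e ρ ρ') (H' : SmithPair S e ρ' ρ) (hS : Acyclic K S) :
    Acyclic K {a ∈ S | e a = a} := by
  intro z hz hdz
  have hρz : ρ z = 0 := by rw [← fixPart_eq_self hz, H.map_fixPart]
  obtain ⟨v, hv, hρv, rfl⟩ := H.exists_bdry_eq hS (H.imageExactFrom_both H' hS 1).1
    (chains_mono (Set.sep_subset _ _) hz) (fun c hc => absurd hc c.card.not_lt_zero) hρz hdz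
  refine ⟨fixPart e v, fixPart_mem_chains hv, ?_⟩
  rw [(H.exists_bdry_add_bdry_fixPart hv hρv).1, fixPart_eq_self hz]

end SmithPair

section Fixed

variable [Fact p.Prime] [CharP K p]

variable (he : e ^ p = 1) (heS : e ∈ stabilizer (α ≃o α) S)

include he heS

lemma smithPair_one_sub_pull : SmithPair S e (1 - pull K e) (pullSum K e p) where
  commute_bdry := (Commute.one_left _).sub_left (commute_pull_bdry e)
  commute_bdry' := commute_pullSum e p
  mem_chains _ hf := sub_mem hf (pull_mem_chains_of_mem_stabilizer heS hf)
  mem_supportedFrom _ _ hf := sub_mem hf (pull_mem_supportedFrom hf)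
  mul_eq_zero := one_sub_pull_mul_pullSum he
  map_fixPart f := sub_eq_zero.2 (pull_fixPart e f).symm
  fixPart_map := fixPart_pullSum
  exists_add_fixPart f hf hρf := by
    obtain ⟨R, hR⟩ := exists_pullSum_mul_add_fixPart (K := K) he
    exact ⟨R * f, mul_mem_chains R hf, by
      rw [pullSum_mul R (sub_eq_zero.1 hρf).symm, hR]⟩

lemma smithPair_pullSum : SmithPair S e (pullSum K e p) (1 - pull K e) where
  commute_bdry := commute_pullSum e p
  commute_bdry' := (Commute.one_left _).sub_left (commute_pull_bdry e)
  mem_chains _ := pullSum_mem_chains heS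
  mem_supportedFrom _ _ hf := by
    rw [pullSum_apply]
    exact sum_mem fun _ _ => pull_mem_supportedFrom hf
  mul_eq_zero := pullSum_mul_one_sub_pull he
  map_fixPart := pullSum_fixPart
  fixPart_map f := by
    rw [LinearMap.sub_apply, Module.End.one_apply, fixPart_sub, fixPart_pull, sub_self]
  exists_add_fixPart f hf hNf := by
    obtain ⟨R, hR⟩ := exists_pullSum_mul_add_fixPart (K := K) he
    obtain ⟨h, hh, hsub⟩ := exists_sub_pull_eq_pullSum_mul he heS R hf hNf
    exact ⟨h, hh, (congrArg (· + fixPart e f) hsub).trans (hR f)⟩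

lemma Acyclic.fixedPoints (hS : Acyclic K S) : Acyclic K {a ∈ S | e a = a} :=
  (smithPair_one_sub_pull he heS).acyclic_fixedPoints (smithPair_pullSum he heS) hS

end Fixed

lemma Acyclic.fixedPoints_of_commute [Fact p.Prime] [CharP K p] (hS : Acyclic K S)
    (F : Finset (α ≃o α)) (hpow : ∀ e ∈ F, e ^ p = 1) (hFS : ∀ e ∈ F, e ∈ stabilizer (α ≃o α) S)
    (hF : ∀ e ∈ F, ∀ g ∈ F, e * g = g * e) : Acyclic K {a ∈ S | ∀ e ∈ F, e a = a} := by
  classical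
  induction F using Finset.induction_on with
  | empty => simpa using hS
  | insert g F _ ih =>
    simp only [Finset.forall_mem_insert] at hpow hFS hF ⊢
    convert Acyclic.fixedPoints (e := g) hpow.1 ?_ (ih hpow.2 hFS.2 fun e he => (hF.2 e he).2)
      using 1
    · ext a
      simp only [Set.mem_ofPred_eq]
      tauto
    · refine mem_stabilizer_set.2 fun a => and_congr (mem_stabilizer_set.1 hFS.1 a) ?_
      refine forall₂_congr fun e he => ?_
      have hcomm : e (g a) = g (e a) := DFunLike.congr_fun (hF.2 e he).1 a
      exact (Eq.congr_left hcomm).trans g.injective.eq_iff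

end Smith

end OrderComplex

/-! ### The Lefschetz number and Oliver's theorem -/

section Contraction

open Matrix

lemma exists_contraction_of_exact {K V : Type*} [Field K] [AddCommGroup V] [Module K V]
    {d : Module.End K V} (hd : d * d = 0) (hex : ∀ x, d x = 0 → ∃ y, d y = x) :
    ∃ h : Module.End K V, d * h + h * d = 1 := by
  obtain ⟨r, hr⟩ := d.rangeRestrict.exists_rightInverse_of_surjective d.range_rangeRestrict
  obtain ⟨s, hs⟩ := r.exists_extend
  have hds {x : V} (hx : d x = 0) : d (s x) = x := by
    obtain ⟨y, rfl⟩ := hex x hx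
    rw [show s (d y) = r (d.rangeRestrict y) from LinearMap.congr_fun hs (d.rangeRestrict y)]
    exact congrArg Subtype.val (LinearMap.congr_fun hr (d.rangeRestrict y))
  have hdd (x : V) : d (d x) = 0 := LinearMap.congr_fun hd x
  refine ⟨s * (1 - s * d), LinearMap.ext fun x => ?_⟩
  have hx : d (x - s (d x)) = 0 := by rw [map_sub, hds (hdd x), sub_self]
  have hsx : d (s (x - s (d x))) = x - s (d x) := hds hx
  simp [hdd, -map_sub, hsx]

variable {I R F K : Type*} [Fintype I] [DecidableEq I] [CommRing R] [CommRing F] [Nontrivial F]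
  [Field K]

/-- A contracting homotopy over a quotient of `R` lifts to `h` over `R` with `D h + h D` of nonzero
determinant, and dividing by this matrix gives a contracting homotopy over the larger field. -/
lemma exists_contraction_of_exists_contraction_map {φ : R →+* F} (hφ : Function.Surjective φ)
    {ψ : R →+* K} (hψ : Function.Injective ψ) {D : Matrix I I R} (hD : D * D = 0)
    (hh : ∃ h, φ.mapMatrix D * h + h * φ.mapMatrix D = 1) :
    ∃ h, ψ.mapMatrix D * h + h * ψ.mapMatrix D = 1 := by
  obtain ⟨h, hh⟩ := hh
  choose lift hlift using hφ
  let s := h.map lift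
  have hs : φ.mapMatrix s = h := by
    ext i j
    exact hlift _
  let w := D * s + s * D
  have hw : φ.mapMatrix w = 1 := by simp only [w, map_add, map_mul, hs, hh]
  have hdet : w.det ≠ 0 := fun h0 => one_ne_zero (α := F) <| by
    rw [← Matrix.det_one (n := I), ← hw, ← RingHom.map_det, h0, map_zero]
  obtain ⟨u, hu⟩ : IsUnit (ψ.mapMatrix w) := by
    rw [Matrix.isUnit_iff_isUnit_det, ← RingHom.map_det]
    exact ((map_ne_zero_iff ψ hψ).2 hdet).isUnit
  have hcomm : Commute (ψ.mapMatrix D) (u : Matrix I I K) := by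
    rw [hu]
    refine Commute.map (f := ψ.mapMatrix) ?_
    simp only [Commute, SemiconjBy, w, mul_add, add_mul, ← mul_assoc, hD, zero_mul, zero_add]
    simp only [mul_assoc, hD, mul_zero, add_zero]
  let v : Matrix I I K := ↑u⁻¹
  have hv : v * ψ.mapMatrix w = 1 := hu ▸ u.inv_mul
  have hDv : ψ.mapMatrix D * v = v * ψ.mapMatrix D := hcomm.units_inv_right.eq
  refine ⟨v * ψ.mapMatrix s, ?_⟩
  rw [← mul_assoc, hDv, mul_assoc, mul_assoc, ← mul_add, ← map_mul, ← map_mul, ← map_add, hv]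

lemma trace_eq_zero_of_anticommute {D A : Matrix I I R} (hh : ∃ h, D * h + h * D = 1)
    (hA : A * D = -(D * A)) : A.trace = 0 := by
  obtain ⟨h, hh⟩ := hh
  calc A.trace = (A * D * h).trace + (A * h * D).trace := by
        rw [← trace_add, mul_assoc, mul_assoc, ← mul_add, hh, mul_one]
    _ = 0 := by rw [trace_mul_comm (A * h) D, hA, ← mul_assoc]; simp

end Contraction

namespace OrderComplex

section Lefschetz

open Matrix MulAction
open scoped Pointwise

variable {α : Type*} [PartialOrder α] {R : Type*} [CommRing R] {S : Set α}

lemma single_mem_chains [DecidableEq (Finset α)] {c : Finset α} (hc : IsChainIn S c) (r : R) :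
    Pi.single c r ∈ chains R S := fun b hb => by
  rw [Pi.single_apply, if_neg]
  rintro rfl
  exact hb hc

variable [Fintype α] [DecidableEq α]

/-- The matrix of the boundary operator on the chains of `S`, with respect to the simplices. -/
noncomputable def bdryMatrix (R : Type*) [CommRing R] (S : Set α) :
    Matrix {c // IsChainIn S c} {c // IsChainIn S c} R :=
  of fun c c' => bdry R (Pi.single c'.1 1) c.1

lemma bdryMatrix_apply (c c' : {c // IsChainIn S c}) :
    bdryMatrix R S c c' = bdry R (Pi.single c'.1 1) c.1 := rfl


lemma bdryMatrix_mulVec {f : Finset α → R} (hf : f ∈ chains R S) :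
    bdryMatrix R S *ᵥ (fun c => f c) = fun c => bdry R f c.1 := by
  have hsum : f = ∑ c : {c // IsChainIn S c}, f c • Pi.single c.1 (1 : R) := by
    ext c
    by_cases hc : IsChainIn S c
    · rw [Finset.sum_apply, Finset.sum_eq_single ⟨c, hc⟩]
      · simp
      · intro b _ hb
        simp [Pi.single_eq_of_ne fun h : c = b => hb (Subtype.ext h.symm)]
      · simp
    · exact (hf c hc).trans ((sum_mem fun b _ => Submodule.smul_mem _ _
        (single_mem_chains b.2 1) : _ ∈ chains R S) c hc).symm
  ext c
  conv_rhs => rw [hsum]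
  simp [mulVec, dotProduct, bdryMatrix_apply, mul_comm]

lemma bdryMatrix_mul_self : bdryMatrix R S * bdryMatrix R S = 0 := by
  ext c c'
  have hcol := bdryMatrix_mulVec (bdry_mem_chains (single_mem_chains c'.2 (1 : R)))
  rw [bdry_bdry (single_mem_chains c'.2 1)] at hcol
  exact congrFun hcol c

lemma bdryMatrix_map (R : Type*) [CommRing R] (S : Set α) :
    (bdryMatrix ℤ S).map (Int.castRingHom R) = bdryMatrix R S := by
  ext c c'
  simp [bdryMatrix_apply, bdry_apply, sgn, Pi.single_apply, apply_ite (Int.cast : ℤ → R)]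

lemma bdryMatrix_eq_zero_of_card_ne {c c' : {c // IsChainIn S c}} (h : c'.1.card ≠ c.1.card + 1) :
    bdryMatrix R S c c' = 0 := by
  refine Finset.sum_eq_zero fun a ha => ?_
  rw [Pi.single_eq_of_ne, mul_zero]
  rintro heq
  exact h (heq ▸ Finset.card_insert_of_notMem (Finset.mem_compl.1 ha))

lemma Acyclic.exists_contraction_bdryMatrix {K : Type*} [Field K] (hS : Acyclic K S) :
    ∃ h, bdryMatrix K S * h + h * bdryMatrix K S = 1 := by
  obtain ⟨h, hh⟩ := exists_contraction_of_exact (d := (bdryMatrix K S).toLin')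
    (by rw [Module.End.mul_eq_comp, ← toLin'_mul, bdryMatrix_mul_self, map_zero]) fun x hx => by
      let f : Finset α → K := fun c => if hc : IsChainIn S c then x ⟨c, hc⟩ else 0
      have hf : f ∈ chains K S := fun c hc => dif_neg hc
      have hfx : (fun c : {c // IsChainIn S c} => f c) = x := funext fun c => dif_pos c.2
      have hdf : bdry K f = 0 := by
        ext c
        by_cases hc : IsChainIn S c
        · rw [toLin'_apply, ← hfx, bdryMatrix_mulVec hf] at hx
          exact congrFun hx ⟨c, hc⟩
        · exact bdry_mem_chains hf c hc
      obtain ⟨g, hg, hdg⟩ := hS f hf hdf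
      exact ⟨fun c => g c, by rw [toLin'_apply, bdryMatrix_mulVec hg, hdg, hfx]⟩
  refine ⟨LinearMap.toMatrix' h, ?_⟩
  simpa [LinearMap.toMatrix'_mul] using congrArg LinearMap.toMatrix' hh

lemma Acyclic.exists_contraction_rat {p : ℕ} [Fact p.Prime] (hS : Acyclic (ZMod p) S) :
    ∃ h, bdryMatrix ℚ S * h + h * bdryMatrix ℚ S = 1 := by
  have hmap (R : Type) [CommRing R] :
      (Int.castRingHom R).mapMatrix (bdryMatrix ℤ S) = bdryMatrix R S := bdryMatrix_map R S
  rw [← hmap]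
  refine exists_contraction_of_exists_contraction_map (φ := Int.castRingHom (ZMod p))
    ZMod.intCast_surjective Int.cast_injective bdryMatrix_mul_self ?_
  rw [hmap]
  exact hS.exists_contraction_bdryMatrix

/-- The permutation of the simplices induced by an automorphism. -/
def chainPerm {e : α ≃o α} (he : e ∈ stabilizer (α ≃o α) S) :
    Equiv.Perm {c // IsChainIn S c} :=
  Equiv.Perm.subtypePerm e.toEquiv.finsetCongr fun c => by
    rw [Equiv.finsetCongr_apply, isChainIn_map, preimage_eq_of_mem_stabilizer he]

lemma bdryMatrix_chainPerm {e : α ≃o α} (he : e ∈ stabilizer (α ≃o α) S)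
    (c c' : {c // IsChainIn S c}) :
    bdryMatrix R S (chainPerm he c) (chainPerm he c') = bdryMatrix R S c c' := by
  have hpull : pull R e (Pi.single (chainPerm he c').1 1) = Pi.single c'.1 1 := by
    ext b
    simp [pull_apply, Pi.single_apply, chainPerm]
  rw [bdryMatrix_apply, bdryMatrix_apply, ← hpull, bdry_pull]
  rfl

/-- The alternating number of chains of `S`, the empty chain included: up to sign the reduced
Euler characteristic of the order complex. -/
noncomputable def altSum (S : Set α) : ℤ :=
  ∑ c with IsChainIn S c, (-1) ^ c.card

lemma intCast_altSum_fixedPoints (e : α ≃o α) :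
    (altSum {a ∈ S | e a = a} : R) =
      ∑ c with IsChainIn S c, fixPart e (fun c => (-1) ^ c.card) c := by
  rw [altSum, Int.cast_sum, Finset.sum_filter, Finset.sum_filter]
  refine Finset.sum_congr rfl fun c _ => ?_
  by_cases hc : e • c = c
  · simp [isChainIn_fixed_iff, hc, fixPart_apply_of_smul_eq]
  · simp [isChainIn_fixed_iff, hc, fixPart_apply_of_smul_ne]

-- The Lefschetz number of `e` is the trace of the signed permutation matrix `A`, whose diagonal
-- entries are at the simplices fixed by `e`.
lemma Acyclic.altSum_fixedPoints {p : ℕ} [Fact p.Prime] (hS : Acyclic (ZMod p) S) {e : α ≃o α}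
    (he : e ∈ stabilizer (α ≃o α) S) : altSum {a ∈ S | e a = a} = 0 := by
  let A : Matrix {c // IsChainIn S c} {c // IsChainIn S c} ℚ :=
    of fun c c' => if chainPerm he c = c' then (-1) ^ c.1.card else 0
  have hA : A * bdryMatrix ℚ S = -(bdryMatrix ℚ S * A) := by
    ext c c'
    obtain ⟨c', rfl⟩ := (chainPerm he).surjective c'
    have hcard : (-1) ^ c.1.card * bdryMatrix ℚ S c c' =
        -(bdryMatrix ℚ S c c' * (-1) ^ c'.1.card) := by
      by_cases h : c'.1.card = c.1.card + 1
      · rw [h, pow_succ]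
        ring
      · simp [bdryMatrix_eq_zero_of_card_ne h]
    simp [A, Matrix.mul_apply, bdryMatrix_chainPerm, hcard]
  have htrace : (altSum {a ∈ S | e a = a} : ℚ) = A.trace := by
    rw [intCast_altSum_fixedPoints, Finset.sum_subtype _ fun c => Finset.mem_filter_univ c]
    refine Finset.sum_congr rfl fun c _ => ?_
    have hsmul : (chainPerm he c).1 = e • c.1 := Finset.map_eq_image _ _
    have hfix : chainPerm he c = c ↔ e • c.1 = c.1 := by rw [Subtype.ext_iff, hsmul]
    by_cases hc : e • c.1 = c.1
    · simp [A, hfix, hc, fixPart_apply_of_smul_eq]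
    · simp [A, hfix, hc, fixPart_apply_of_smul_ne]
  exact_mod_cast htrace.trans (trace_eq_zero_of_anticommute hS.exists_contraction_rat hA)

end Lefschetz

section Euler

open MulAction Pointwise

variable {α : Type*} [PartialOrder α] [Fintype α] {S : Set α}

lemma sum_fixPart_eq_sum [DecidableEq α] {p : ℕ} [Fact p.Prime] {K : Type*} [CommRing K]
    [CharP K p] {e : α ≃o α} (he : e ^ p = 1) {f : Finset α → K} (hf : pull K e f = f) :
    ∑ c, fixPart e f c = ∑ c, f c := by
  obtain ⟨R, hR⟩ := exists_pullSum_mul_add_fixPart (K := K) he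
  have hsum (g : Finset α → K) : ∑ c, pullSum K e p g c = 0 := by
    simp only [pullSum_apply, Finset.sum_apply, pull_apply_smul]
    rw [Finset.sum_comm]
    have hperm (j : ℕ) : ∑ c, g (e ^ j • c) = ∑ c, g c := Equiv.sum_comp (toPerm (e ^ j)) g
    simp [hperm]
  conv_rhs => rw [← hR f, ← pullSum_mul R hf]
  simp [Finset.sum_add_distrib, hsum]

lemma altSum_modEq_altSum_fixedPoints {q : ℕ} [Fact q.Prime] {e : α ≃o α}
    (he : e ∈ stabilizer (α ≃o α) S) (heq : e ^ q = 1) :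
    altSum S ≡ altSum {a ∈ S | e a = a} [ZMOD q] := by
  classical
  let f : Finset α → ZMod q := fun c => if IsChainIn S c then (-1) ^ c.card else 0
  have hf : pull (ZMod q) e f = f := by
    ext c
    simp only [pull_apply, f, Finset.card_map, isChainIn_map, preimage_eq_of_mem_stabilizer he]
  rw [← ZMod.intCast_eq_intCast_iff, intCast_altSum_fixedPoints, altSum, Int.cast_sum,
    Finset.sum_filter, Finset.sum_filter]
  have hsum : ∑ c, f c = ∑ c, fixPart e f c := (sum_fixPart_eq_sum heq hf).symm
  push_cast
  refine hsum.trans (Finset.sum_congr rfl fun c _ => ?_)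
  by_cases hc : e • c = c
  · simp [f, fixPart_apply_of_smul_eq, hc]
  · simp [fixPart_apply_of_smul_ne, hc]

lemma altSum_empty : altSum (∅ : Set α) = 1 := by
  have hempty (c : Finset α) : IsChainIn (∅ : Set α) c ↔ c = ∅ :=
    ⟨fun h => Finset.eq_empty_of_forall_notMem h.1, by rintro rfl; simp [IsChainIn]⟩
  rw [altSum, Finset.sum_eq_single_of_mem ∅ (by simp [hempty])]
  · simp
  · simp +contextual [hempty]

end Euler

section Oliver

open MulAction Pointwise

variable {α : Type*} [PartialOrder α] {S : Set α}

lemma mem_stabilizer_fixedPoints {H : Subgroup (α ≃o α)} {e : α ≃o α}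
    (he : e ∈ stabilizer (α ≃o α) S) (heH : e ∈ Subgroup.normalizer (H : Set (α ≃o α))) :
    e ∈ stabilizer (α ≃o α) {a ∈ S | ∀ g ∈ H, g a = a} := by
  refine mem_stabilizer_set.2 fun a => and_congr (mem_stabilizer_set.1 he a) ?_
  have hconj (g : α ≃o α) : (e⁻¹ * g * e) a = a ↔ g (e a) = e a := e.symm_apply_eq
  constructor
  · intro ha g hg
    have hg' := (Subgroup.mem_normalizer_iff.1 heH g).1 hg
    simpa [mul_assoc] using (hconj (e * g * e⁻¹)).2 (ha _ hg')
  · exact fun ha g hg => (hconj g).1 (ha _ ((Subgroup.mem_normalizer_iff''.1 heH g).1 hg))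

lemma forall_mem_sup_zpowers_iff {A : Subgroup (α ≃o α)} {σ : α ≃o α} {a : α} :
    (∀ g ∈ A ⊔ Subgroup.zpowers σ, g a = a) ↔ (∀ g ∈ A, g a = a) ∧ σ a = a := by
  have h := @sup_le_iff _ _ A (Subgroup.zpowers σ) (stabilizer (α ≃o α) a)
  rwa [Subgroup.zpowers_le] at h

/-- Oliver's fixed point theorem for the order complex of a poset acyclic modulo `p`. -/
theorem Acyclic.exists_fixed [Fintype α] [DecidableEq α] {p q : ℕ} [Fact p.Prime] [Fact q.Prime]
    {A : Subgroup (α ≃o α)} {σ τ : α ≃o α} (hS : Acyclic (ZMod p) S)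
    (hApow : ∀ e ∈ A, e ^ p = 1) (hA : ∀ e ∈ A, ∀ g ∈ A, e * g = g * e)
    (hσA : σ ∈ Subgroup.normalizer (A : Set (α ≃o α)))
    (hτA : τ ∈ Subgroup.normalizer ((A ⊔ Subgroup.zpowers σ : Subgroup (α ≃o α)) : Set (α ≃o α)))
    (hτ : τ ^ q = 1) (hAS : A ≤ stabilizer (α ≃o α) S) (hσS : σ ∈ stabilizer (α ≃o α) S)
    (hτS : τ ∈ stabilizer (α ≃o α) S) :
    ∃ a ∈ S, (∀ g ∈ A, g a = a) ∧ σ a = a ∧ τ a = a := by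
  have hfinite : (A : Set (α ≃o α)).Finite :=
    have := DFunLike.finite (α ≃o α)
    Set.toFinite _
  have hSA : Acyclic (ZMod p) {a ∈ S | ∀ g ∈ A, g a = a} := by
    simpa using hS.fixedPoints_of_commute hfinite.toFinset (by simpa using hApow)
      (fun e he => hAS (by simpa using he)) (by simpa using hA)
  let T : Set α := {a ∈ S | ∀ g ∈ A ⊔ Subgroup.zpowers σ, g a = a}
  have hT : {a ∈ {a ∈ S | ∀ g ∈ A, g a = a} | σ a = a} = T := by
    ext a
    simp only [T, Set.mem_ofPred_eq, forall_mem_sup_zpowers_iff, and_assoc]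
  have haltSum : altSum T = 0 :=
    hT ▸ hSA.altSum_fixedPoints (mem_stabilizer_fixedPoints hσS hσA)
  have hmod : altSum T ≡ altSum {a ∈ T | τ a = a} [ZMOD q] :=
    altSum_modEq_altSum_fixedPoints (mem_stabilizer_fixedPoints hτS hτA) hτ
  have hne : {a ∈ T | τ a = a}.Nonempty := by
    by_contra! hempty
    rw [haltSum, hempty, altSum_empty, Int.modEq_comm, Int.modEq_zero_iff_dvd] at hmod
    exact (Fact.out : q.Prime).one_lt.ne' (by exact_mod_cast Int.eq_one_of_dvd_one (by simp) hmod)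
  obtain ⟨a, ⟨haS, ha⟩, hτa⟩ := hne
  exact ⟨a, haS, (forall_mem_sup_zpowers_iff.1 ha).1, (forall_mem_sup_zpowers_iff.1 ha).2, hτa⟩

end Oliver

end OrderComplex

/-! ### Decision trees and acyclicity -/

namespace OrderComplex

section Lattice

variable {α : Type*} [SemilatticeSup α] [Fintype α] [DecidableEq α] {K : Type*} [CommRing K]
  {S : Set α} {e : α}

-- The elements that are not above `e` are adjoined one by one in increasing order; the link of
-- each of them, `a`, is then a cone with apex `a ⊔ e`.
lemma acyclic_of_forall_sup_mem (he : e ∈ S) (hsup : ∀ a ∈ S, a ⊔ e ∈ S) : Acyclic K S := by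
  classical
  have hunion (Z : Finset α) (hZ : ∀ a ∈ Z, a ∈ S ∧ ¬e ≤ a) :
      Acyclic K ({a ∈ S | e ≤ a} ∪ Z) := by
    induction Z using Finset.strongInduction with
    | H Z ih =>
      rcases Z.eq_empty_or_nonempty with rfl | hne
      · rw [Finset.coe_empty, Set.union_empty]
        exact acyclic_of_comparable ⟨he, le_rfl⟩ fun a ha => Or.inr ha.2
      obtain ⟨a, haZ, hmax⟩ := Z.exists_maximal hne
      have hZa := ih (Z.erase a) (Finset.erase_ssubset haZ)
        fun b hb => hZ b (Finset.mem_of_mem_erase hb)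
      rw [← Finset.insert_erase haZ, Finset.coe_insert, Set.union_insert]
      refine hZa.insert (by simp [(hZ a haZ).2]) (acyclic_of_comparable (e := a ⊔ e)
        ⟨Or.inl ⟨hsup a (hZ a haZ).1, le_sup_right⟩, Or.inr le_sup_left⟩ ?_)
      rintro b ⟨hb | hb, hba | hab⟩
      · exact Or.inl (hba.trans le_sup_left)
      · exact Or.inr (sup_le hab hb.2)
      · exact Or.inl (hba.trans le_sup_left)
      · obtain ⟨hne, hbZ⟩ := Finset.mem_erase.1 hb
        exact absurd ((hmax hbZ hab).antisymm hab) hne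
  convert hunion {a | a ∈ S ∧ ¬e ≤ a} (by simp) using 1
  ext a
  by_cases hea : e ≤ a <;> simp [hea]

lemma acyclic_of_deletion_of_link [OrderBot α] {Δ : Set α} (hΔ : IsLowerSet Δ) (he : e ∈ Δ)
    (he0 : e ≠ ⊥) (hdel : Acyclic K {x ∈ {x ∈ Δ | ¬e ≤ x} | x ≠ ⊥})
    (hlink : Acyclic K {x ∈ {x | ¬e ≤ x ∧ x ⊔ e ∈ Δ} | x ≠ ⊥}) : Acyclic K {x ∈ Δ | x ≠ ⊥} := by
  have hstar : Acyclic K {x ∈ Δ | x ≠ ⊥ ∧ x ⊔ e ∈ Δ} :=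
    acyclic_of_forall_sup_mem (e := e) (by simp [he, he0]) fun x hx => by
      simp [hx.2.2, sup_eq_bot_iff, hx.2.1]
  have hunion : {x ∈ Δ | x ≠ ⊥} =
      {x ∈ {x ∈ Δ | ¬e ≤ x} | x ≠ ⊥} ∪ {x ∈ Δ | x ≠ ⊥ ∧ x ⊔ e ∈ Δ} := by
    ext x
    by_cases hex : e ≤ x <;> simp only [Set.mem_ofPred_eq, Set.mem_union, hex, sup_of_le_left] <;>
      tauto
  have hinter : {x ∈ {x ∈ Δ | ¬e ≤ x} | x ≠ ⊥} ∩ {x ∈ Δ | x ≠ ⊥ ∧ x ⊔ e ∈ Δ} =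
      {x ∈ {x | ¬e ≤ x ∧ x ⊔ e ∈ Δ} | x ≠ ⊥} := by
    ext x
    have hx : x ⊔ e ∈ Δ → x ∈ Δ := hΔ le_sup_left
    simp only [Set.mem_inter_iff, Set.mem_ofPred_eq]
    tauto
  rw [hunion]
  refine hdel.union hstar (hinter ▸ hlink) fun c hc => ?_
  rw [← hunion] at hc
  by_cases hcstar : ∀ x ∈ c, x ⊔ e ∈ Δ
  · exact Or.inr ⟨fun x hx => ⟨(hc.1 x hx).1, (hc.1 x hx).2, hcstar x hx⟩, hc.2⟩
  push Not at hcstar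
  obtain ⟨x, hx, hxe⟩ := hcstar
  refine Or.inl ⟨fun y hy => ⟨⟨(hc.1 y hy).1, fun hey => hxe ?_⟩, (hc.1 y hy).2⟩, hc.2⟩
  rcases hc.2.total hx hy with hxy | hyx
  · exact hΔ (sup_le hxy hey) (hc.1 y hy).1
  · exact (sup_eq_left.2 (hey.trans hyx)).symm ▸ (hc.1 x hx).1

end Lattice

section DecisionTree

variable {ι : Type} {T t f : DecisionTree ι} {Δ : Set (ι → Bool)}

/-- The tree `T`, with the variables outside `X` frozen to the values `m`, decides the simplicial
complex `Δ` with vertices in `X`; the simplices are encoded as indicator functions, the empty one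
included. -/
structure DecidesOn (T : DecisionTree ι) (X : Finset ι) (m : ι → Bool) (Δ : Set (ι → Bool)) :
    Prop where
  isLowerSet : IsLowerSet Δ
  bot_mem : ⊥ ∈ Δ
  eq_false_of_mem : ∀ x ∈ Δ, ∀ i ∉ X, x i = false
  frozen_eq_false : ∀ i ∈ X, m i = false
  eval_sup_iff : ∀ x : ι → Bool, (∀ i ∉ X, x i = false) → (T.eval (x ⊔ m) = true ↔ x ∈ Δ)

namespace DecidesOn

variable {X : Finset ι} {m : ι → Bool} {i : ι}

lemma skip (h : DecidesOn (.node i t f) X m Δ) (hi : i ∉ X) :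
    DecidesOn (if m i then t else f) X m Δ where
  __ := h
  eval_sup_iff x hx := by
    rw [← h.eval_sup_iff x hx]
    cases hmi : m i <;> simp [DecisionTree.eval, hmi, hx i hi]

variable [DecidableEq ι]

lemma update_bot_true_le_iff {x : ι → Bool} : Function.update ⊥ i true ≤ x ↔ x i = true := by
  simp [update_le_iff, Bool.le_iff_imp]

lemma deletion (h : DecidesOn (.node i t f) X m Δ) (hi : i ∈ X) :
    DecidesOn f (X.erase i) m {x ∈ Δ | ¬Function.update ⊥ i true ≤ x} where
  isLowerSet x y hyx hx := ⟨h.isLowerSet hyx hx.1, fun hy => hx.2 (hy.trans hyx)⟩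
  bot_mem := ⟨h.bot_mem, by simp⟩
  eq_false_of_mem x hx j hj := by
    by_cases hji : j = i
    · simpa [hji, update_bot_true_le_iff] using hx.2
    · exact h.eq_false_of_mem x hx.1 j (by simpa [hji] using hj)
  frozen_eq_false j hj := h.frozen_eq_false j (Finset.mem_of_mem_erase hj)
  eval_sup_iff x hx := by
    have hxi : x i = false := hx i (by simp)
    have hxX := h.eval_sup_iff x fun j hj => hx j fun hj' => hj (Finset.mem_of_mem_erase hj')
    simpa [DecisionTree.eval, hxi, h.frozen_eq_false i hi, update_bot_true_le_iff] using hxX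

lemma link (h : DecidesOn (.node i t f) X m Δ) (hi : i ∈ X) (hiΔ : Function.update ⊥ i true ∈ Δ) :
    DecidesOn t (X.erase i) (m ⊔ Function.update ⊥ i true)
      {x | ¬Function.update ⊥ i true ≤ x ∧ x ⊔ Function.update ⊥ i true ∈ Δ} where
  isLowerSet x y hyx hx :=
    ⟨fun hy => hx.1 (hy.trans hyx), h.isLowerSet (sup_le_sup_right hyx _) hx.2⟩
  bot_mem := ⟨by simp, by simpa using hiΔ⟩
  eq_false_of_mem x hx j hj := by
    by_cases hji : j = i
    · simpa [hji, update_bot_true_le_iff] using hx.1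
    · exact h.eq_false_of_mem x (h.isLowerSet le_sup_left hx.2) j (by simpa [hji] using hj)
  frozen_eq_false j hj := by
    simp [h.frozen_eq_false j (Finset.mem_of_mem_erase hj), Finset.ne_of_mem_erase hj]
  eval_sup_iff x hx := by
    have hxi : x i = false := hx i (by simp)
    have hxX := h.eval_sup_iff (x ⊔ Function.update ⊥ i true) fun j hj => by
      simp [hx j fun hj' => hj (Finset.mem_of_mem_erase hj'), ne_of_mem_of_not_mem hi hj |>.symm]
    rw [sup_assoc, sup_comm _ m] at hxX
    simpa [DecisionTree.eval, hxi, update_bot_true_le_iff] using hxX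

variable [Fintype ι] {K : Type*} [CommRing K]

lemma acyclic (h : DecidesOn T X m Δ) (hd : T.depth < X.card) : Acyclic K {x ∈ Δ | x ≠ ⊥} := by
  induction T generalizing X m Δ with
  | leaf v =>
    have hmem (x : ι → Bool) (hx : ∀ i ∉ X, x i = false) : x ∈ Δ :=
      (h.eval_sup_iff x hx).1 ((h.eval_sup_iff ⊥ fun _ _ => rfl).2 h.bot_mem)
    obtain ⟨i, hi⟩ : X.Nonempty := Finset.card_pos.1 hd
    refine acyclic_of_comparable (e := fun j => decide (j ∈ X)) ⟨hmem _ (by simp), fun h0 => ?_⟩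
      fun x hx => Or.inl fun j => ?_
    · simpa [hi] using congrFun h0 i
    · by_cases hj : j ∈ X <;> simp [hj, h.eq_false_of_mem x hx.1]
  | node i t f iht ihf =>
    rw [DecisionTree.depth] at hd
    by_cases hi : i ∈ X
    · have hcard := Finset.card_erase_of_mem hi
      have hdel := ihf (h.deletion hi) (by omega)
      by_cases hiΔ : Function.update ⊥ i true ∈ Δ
      · have hne : Function.update ⊥ i true ≠ (⊥ : ι → Bool) := fun h0 => by
          simpa using congrFun h0 i
        exact acyclic_of_deletion_of_link h.isLowerSet hiΔ hne hdel
          (iht (h.link hi hiΔ) (by omega))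
      · convert hdel using 1
        ext x
        have hx (hx : x ∈ Δ) : ¬Function.update ⊥ i true ≤ x := fun hix =>
          hiΔ (h.isLowerSet hix hx)
        simp only [Set.mem_ofPred_eq]
        tauto
    · have hskip := h.skip hi
      cases hmi : m i
      · exact ihf (by simpa [hmi] using hskip) (by omega)
      · exact iht (by simpa [hmi] using hskip) (by omega)

end DecidesOn

theorem acyclic_of_depth_lt [Fintype ι] [DecidableEq ι] {K : Type*} [CommRing K] (hΔ : IsLowerSet Δ)
    (hbot : ⊥ ∈ Δ) (hT : ∀ x, T.eval x = true ↔ x ∈ Δ) (hd : T.depth < Fintype.card ι) :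
    Acyclic K {x ∈ Δ | x ≠ ⊥} :=
  DecidesOn.acyclic (T := T) (X := Finset.univ) (m := ⊥) ⟨hΔ, hbot, by simp, by simp, by simp [hT]⟩
    hd

end DecisionTree

end OrderComplex

section Tree

lemma exists_decisionTree_depth_le_card {ι : Type} {X : Finset ι}
    {f : (ι → Bool) → Bool} (hf : ∀ x y, (∀ i ∈ X, x i = y i) → f x = f y) :
    ∃ T : DecisionTree ι, T.depth ≤ X.card ∧ T.eval = f := by
  classical
  induction X using Finset.induction_on generalizing f with
  | empty => exact ⟨.leaf (f ⊥), le_rfl, funext fun x => hf ⊥ x (by simp)⟩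
  | insert i X hi ih =>
    have hupdate (b : Bool) (x y : ι → Bool) (hxy : ∀ j ∈ X, x j = y j) :
        f (Function.update x i b) = f (Function.update y i b) := hf _ _ fun j hj => by
      rcases Finset.mem_insert.1 hj with rfl | hj
      · simp
      · simp [Function.update_apply, hxy j hj]
    obtain ⟨T₁, hd₁, hT₁⟩ := ih (hupdate true)
    obtain ⟨T₀, hd₀, hT₀⟩ := ih (hupdate false)
    refine ⟨.node i T₁ T₀, ?_, funext fun x => ?_⟩
    · rw [Finset.card_insert_of_notMem hi]
      exact Nat.succ_le_succ (max_le hd₁ hd₀)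
    · rw [DecisionTree.eval, hT₁, hT₀]
      cases hxi : x i <;> simp [← hxi]

instance instFintypeEdgeVar (n : ℕ) : Fintype (EdgeVar n) :=
  inferInstanceAs (Fintype {p : Fin n × Fin n // p.1 < p.2})

instance instDecidableEqEdgeVar (n : ℕ) : DecidableEq (EdgeVar n) :=
  inferInstanceAs (DecidableEq {p : Fin n × Fin n // p.1 < p.2})

lemma card_edgeVar (n : ℕ) : Fintype.card (EdgeVar n) = n * (n - 1) / 2 := by
  have hcard : Fintype.card (EdgeVar n) = ∑ j : Fin n, (Finset.Iio j).card := by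
    refine (Fintype.card_subtype fun p : Fin n × Fin n => p.1 < p.2).trans ?_
    rw [Finset.card_filter, Fintype.sum_prod_type_right]
    simp [Finset.filter_gt_eq_Iio]
  simp only [hcard, Fin.card_Iio]
  rw [Fin.sum_univ_eq_sum_range (fun i => i) n, Finset.sum_range_id]

variable {n : ℕ} {P : Set (SimpleGraph (Fin n))}

lemma exists_decisionTree_of_not_evasive (h : ¬Evasive P) :
    ∃ T : DecisionTree (EdgeVar n), (∀ x, T.eval x = true ↔ graphOfInput x ∈ P) ∧
      T.depth < Fintype.card (EdgeVar n) := by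
  classical
  have hmem : Fintype.card (EdgeVar n) ∈ {d | ∃ T : DecisionTree (EdgeVar n),
      (∀ x, T.eval x = true ↔ graphOfInput x ∈ P) ∧ T.depth ≤ d} := by
    obtain ⟨T, hd, hT⟩ := exists_decisionTree_depth_le_card (X := Finset.univ)
      (f := fun x => decide (graphOfInput x ∈ P)) fun x y hxy => by
        rw [funext fun i => hxy i (Finset.mem_univ i)]
    exact ⟨T, by simp [hT], hd⟩
  obtain ⟨T, hT, hd⟩ := Nat.sInf_mem ⟨_, hmem⟩
  refine ⟨T, hT, hd.trans_lt ((Nat.sInf_le hmem).lt_of_ne ?_)⟩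
  rw [card_edgeVar]
  exact h

end Tree

section Graph

variable {n : ℕ}

lemma graphOfInput_adj (x : EdgeVar n → Bool) {i j : Fin n} (h : i < j) :
    (graphOfInput x).Adj i j ↔ x ⟨(i, j), h⟩ = true := by
  simp [graphOfInput, h, h.ne, h.not_gt]

lemma graphOfInput_le_iff {x y : EdgeVar n → Bool} :
    graphOfInput x ≤ graphOfInput y ↔ x ≤ y := by
  refine ⟨fun h ⟨_, hij⟩ hx => (graphOfInput_adj y hij).1 (h ((graphOfInput_adj x hij).2 hx)),
    fun h i j hx => ?_⟩
  rcases lt_trichotomy i j with hij | rfl | hij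
  · exact (graphOfInput_adj y hij).2 (h _ ((graphOfInput_adj x hij).1 hx))
  · simp at hx
  · exact ((graphOfInput_adj y hij).2 (h _ ((graphOfInput_adj x hij).1 hx.symm))).symm

open scoped Classical in
/-- The identification of the assignments to the adjacency variables with the graphs. -/
noncomputable def inputEquiv (n : ℕ) : (EdgeVar n → Bool) ≃o SimpleGraph (Fin n) where
  toFun := graphOfInput
  invFun G e := decide (G.Adj e.1.1 e.1.2)
  left_inv x := by
    ext ⟨⟨i, j⟩, h⟩
    exact Bool.eq_iff_iff.2 (decide_eq_true_iff.trans (graphOfInput_adj x h))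
  right_inv G := by
    ext i j
    rcases lt_trichotomy i j with h | rfl | h
    · rw [graphOfInput_adj _ h, decide_eq_true_iff]
    · simp
    · rw [SimpleGraph.adj_comm, graphOfInput_adj _ h, decide_eq_true_iff, SimpleGraph.adj_comm]
  map_rel_iff' := graphOfInput_le_iff

variable {V W : Type*}

/-- Transport of graphs along a bijection of the vertices, as an isomorphism of posets. -/
def relabel (e : V ≃ W) : SimpleGraph V ≃o SimpleGraph W where
  toEquiv := e.simpleGraph
  map_rel_iff' {G H} :=
    ⟨fun h a b hab => by simpa using @h (e a) (e b) (by simpa using hab), fun h _ _ hab => h hab⟩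

lemma relabel_adj (e : V ≃ W) (G : SimpleGraph V) (a b : V) :
    (relabel e G).Adj (e a) (e b) ↔ G.Adj a b := by
  simp [relabel]

lemma ncard_edgeSet_relabel (e : V ≃ W) (G : SimpleGraph V) :
    (relabel e G).edgeSet.ncard = G.edgeSet.ncard :=
  Set.ncard_congr' (SimpleGraph.Iso.comap e.symm G).mapEdgeSet

/-- The action of the permutations of the vertices on the poset of graphs. -/
def relabelHom (V : Type*) : Equiv.Perm V →* (SimpleGraph V ≃o SimpleGraph V) where
  toFun := relabel
  map_one' := rfl
  map_mul' _ _ := rfl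

/-- The automorphisms of `G`, as a subgroup of the permutations of the vertices. -/
def autSubgroup (G : SimpleGraph V) : Subgroup (Equiv.Perm V) :=
  (MulAction.stabilizer (SimpleGraph V ≃o SimpleGraph V) G).comap (relabelHom V)

lemma adj_iff_of_mem_autSubgroup {G : SimpleGraph V} {g : Equiv.Perm V} (hg : g ∈ autSubgroup G)
    {a b : V} : G.Adj (g a) (g b) ↔ G.Adj a b := by
  conv_lhs => rw [← show relabel g G = G from hg]
  exact relabel_adj g G a b

end Graph

section Property

open MulAction Pointwise OrderComplex

variable {n : ℕ} {P : Set (SimpleGraph (Fin n))} {V : Type*} {f : V ≃ Fin n}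

lemma acyclic_of_not_evasive [Fintype (SimpleGraph V)] [DecidableEq (SimpleGraph V)]
    {K : Type*} [CommRing K] (hmono : MonotoneDecreasing P) (hne : P.Nonempty) (hev : ¬Evasive P) :
    Acyclic K {G : SimpleGraph V | relabel f G ∈ P ∧ G ≠ ⊥} := by
  obtain ⟨T, hT, hd⟩ := exists_decisionTree_of_not_evasive hev
  have hlower : IsLowerSet {x : EdgeVar n → Bool | graphOfInput x ∈ P} :=
    fun x y hyx hx => hmono _ _ (graphOfInput_le_iff.2 hyx) hx
  have hbot : (⊥ : EdgeVar n → Bool) ∈ {x : EdgeVar n → Bool | graphOfInput x ∈ P} := by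
    obtain ⟨G, hG⟩ := hne
    exact hmono G (inputEquiv n ⊥) (by simp) hG
  convert (acyclic_of_depth_lt hlower hbot hT hd).preimage
    ((relabel f).trans (inputEquiv n).symm) using 1
  ext G
  have hG : graphOfInput ((inputEquiv n).symm (relabel f G)) = relabel f G :=
    (inputEquiv n).apply_symm_apply _
  simp [hG]

lemma relabelHom_mem_stabilizer (hP : IsGraphProperty P) (g : Equiv.Perm V) :
    relabelHom V g ∈
      stabilizer (SimpleGraph V ≃o SimpleGraph V) {G | relabel f G ∈ P ∧ G ≠ ⊥} := by
  have hrelabel (g : Equiv.Perm V) {G} (hG : relabel f G ∈ P) : relabel f (relabel g G) ∈ P := by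
    convert hP ((f.symm.trans g).trans f) _ hG using 1
    rw [← SimpleGraph.comap_symm]
    ext a b
    simp [relabel]
  refine mem_stabilizer_set.2 fun G => and_congr ⟨fun h => ?_, hrelabel g⟩ ?_
  · exact (relabel g).symm_apply_apply G ▸ hrelabel g⁻¹ h
  · exact (map_eq_bot_iff (relabel g)).not

theorem exists_le_autSubgroup_of_not_evasive (f : V ≃ Fin n) (hP : IsGraphProperty P)
    (hmono : MonotoneDecreasing P) (hne : P.Nonempty) (hev : ¬Evasive P) {p q : ℕ}
    [Fact p.Prime] [Fact q.Prime]
    {A : Subgroup (Equiv.Perm V)} {σ τ : Equiv.Perm V} (hApow : ∀ e ∈ A, e ^ p = 1)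
    (hA : ∀ e ∈ A, ∀ g ∈ A, e * g = g * e)
    (hσA : σ ∈ Subgroup.normalizer (A : Set (Equiv.Perm V)))
    (hτA : τ ∈ Subgroup.normalizer
      ((A ⊔ Subgroup.zpowers σ : Subgroup (Equiv.Perm V)) : Set (Equiv.Perm V)))
    (hτ : τ ^ q = 1) :
    ∃ G : SimpleGraph V, relabel f G ∈ P ∧ G ≠ ⊥ ∧ A ⊔ Subgroup.zpowers σ ≤ autSubgroup G ∧
      τ ∈ autSubgroup G := by
  classical
  have := Fintype.ofEquiv _ f.symm
  have := Fintype.ofFinite (SimpleGraph V)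
  have hnormalizer (H : Subgroup (Equiv.Perm V)) {g : Equiv.Perm V}
      (hg : g ∈ Subgroup.normalizer (H : Set (Equiv.Perm V))) :
      relabelHom V g ∈ Subgroup.normalizer (H.map (relabelHom V) : Set _) :=
    Subgroup.le_normalizer_map _ (Subgroup.mem_map_of_mem _ hg)
  have hτA' := hnormalizer _ hτA
  rw [Subgroup.map_sup, MonoidHom.map_zpowers] at hτA'
  have hacyclic : Acyclic (ZMod p) {G : SimpleGraph V | relabel f G ∈ P ∧ G ≠ ⊥} :=
    acyclic_of_not_evasive hmono hne hev
  obtain ⟨G, ⟨hGP, hG⟩, hGA, hGσ, hGτ⟩ := hacyclic.exists_fixed (A := A.map (relabelHom V))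
    (by rintro _ ⟨g, hg, rfl⟩; rw [← map_pow, hApow g hg, map_one])
    (by rintro _ ⟨e, he, rfl⟩ _ ⟨g, hg, rfl⟩; rw [← map_mul, hA e he g hg, map_mul])
    (hnormalizer A hσA) hτA' (by rw [← map_pow, hτ, map_one])
    (by rintro _ ⟨g, -, rfl⟩; exact relabelHom_mem_stabilizer hP g)
    (relabelHom_mem_stabilizer hP σ) (relabelHom_mem_stabilizer hP τ)
  exact ⟨G, hGP, hG, sup_le (fun g hg => hGA _ (Subgroup.mem_map_of_mem _ hg))
    (Subgroup.zpowers_le.2 hGσ), hGτ⟩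

end Property

/-! ### The group action on the vertices -/

section Edges

lemma card_le_two_mul_ncard_edgeSet {V α : Type*} [Finite V] [Fintype α] {G : SimpleGraph V}
    {φ : α → V × V} (hφ : Function.Injective φ) (hadj : ∀ a, G.Adj (φ a).1 (φ a).2) :
    Fintype.card α ≤ 2 * G.edgeSet.ncard := by
  classical
  have := Fintype.ofFinite V
  rw [← SimpleGraph.coe_edgeFinset, Set.ncard_coe_finset,
    ← SimpleGraph.dart_card_eq_twice_card_edges]
  exact Fintype.card_le_of_injective (fun a => (⟨φ a, hadj a⟩ : G.Dart))
    fun a b h => hφ (congrArg SimpleGraph.Dart.toProd h)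

end Edges

section Subgroups

variable {G H : Type*} [Group G] [Group H]

lemma mem_normalizer_range [Finite H] (φ : H →* G) {g : G}
    (h : ∀ x, ∃ y, g * φ x = φ y * g) : g ∈ Subgroup.normalizer (φ.range : Set G) := by
  have : Finite (φ.range : Set G) := Set.finite_range φ
  refine Subgroup.mem_normalizer_fintype ?_
  rintro _ ⟨x, rfl⟩
  obtain ⟨y, hy⟩ := h x
  exact ⟨y, by rw [hy, mul_inv_cancel_right]⟩

lemma mem_normalizer_zpowers {g a : G} (h : Commute g a) :
    g ∈ Subgroup.normalizer (Subgroup.zpowers a : Set G) :=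
  Subgroup.centralizer_le_normalizer _ fun _ ⟨j, hj⟩ => hj ▸ (h.zpow_right j).symm

lemma left_mem_zpowers_mul {a b : G} (h : Commute a b) {m n : ℕ} (ha : a ^ m = 1)
    (hb : b ^ n = 1) (hmn : m.Coprime n) : a ∈ Subgroup.zpowers (a * b) := by
  have hpow : (a * b) ^ n = a ^ n := by rw [h.mul_pow, hb, mul_one]
  have hmem : a ∈ Subgroup.zpowers (a ^ n) :=
    mem_zpowers_pow_iff.2 (hmn.symm.coprime_dvd_right (orderOf_dvd_of_pow_eq_one ha))
  exact Subgroup.zpowers_le.2 (hpow ▸ Subgroup.npow_mem_zpowers (a * b) n) hmem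

lemma zpowers_mul_eq_sup {a b : G} (h : Commute a b) {m n : ℕ} (ha : a ^ m = 1)
    (hb : b ^ n = 1) (hmn : m.Coprime n) :
    Subgroup.zpowers (a * b) = Subgroup.zpowers a ⊔ Subgroup.zpowers b := by
  refine le_antisymm (Subgroup.zpowers_le.2 (Subgroup.mul_mem_sup (Subgroup.mem_zpowers a)
    (Subgroup.mem_zpowers b))) (sup_le (Subgroup.zpowers_le.2 ?_) (Subgroup.zpowers_le.2 ?_))
  · exact left_mem_zpowers_mul h ha hb hmn
  · exact h.eq ▸ left_mem_zpowers_mul h.symm hb ha hmn.symm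

end Subgroups

section Action

variable (k p r : ℕ)

/-- The vertex set: `k` blocks of size `p` and one block of size `r`. -/
abbrev Vert : Type := (ZMod k × ZMod p) ⊕ ZMod r

/-- Independent translations of the `k` small blocks. -/
def blockShift : Multiplicative (ZMod k → ZMod p) →* Equiv.Perm (Vert k p r) where
  toFun v := Equiv.sumCongr
    (Equiv.prodShear (Equiv.refl _) fun i => Equiv.addRight (v.toAdd i)) (Equiv.refl _)
  map_one' := by ext (⟨i, x⟩ | y) <;> simp
  map_mul' v w := by ext (⟨i, x⟩ | y) <;> simp [add_comm, add_left_comm]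

/-- Translations of the large block. -/
def shift : Multiplicative (ZMod r) →* Equiv.Perm (Vert k p r) where
  toFun c := Equiv.sumCongr (Equiv.refl _) (Equiv.addRight c.toAdd)
  map_one' := by ext (z | y) <;> simp
  map_mul' c d := by ext (z | y) <;> simp [add_comm]

/-- Multiplications by units on the large block. -/
def scale : (ZMod r)ˣ →* Equiv.Perm (Vert k p r) where
  toFun w := Equiv.sumCongr (Equiv.refl _) (Units.mulLeft w)
  map_one' := by ext (z | y) <;> simp
  map_mul' w w' := by ext (z | y) <;> simp [mul_assoc]

variable {k p r}

/-- The multipliers of the twisted rotation of the blocks. -/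
def twist (k : ℕ) (l : (ZMod p)ˣ) (i : ZMod k) : (ZMod p)ˣ := if i = -1 then l else 1

/-- The cyclic rotation of the small blocks, twisted so that a full turn is the multiplication
by `l` on each of them. -/
def turn (k r : ℕ) (l : (ZMod p)ˣ) : Equiv.Perm (Vert k p r) :=
  Equiv.sumCongr (Equiv.prodShear (Equiv.addRight 1) fun i => Units.mulLeft (twist k l i))
    (Equiv.refl _)

@[simp] lemma blockShift_inl (v : Multiplicative (ZMod k → ZMod p)) (i x) :
    blockShift k p r v (Sum.inl (i, x)) = Sum.inl (i, x + v.toAdd i) := rfl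
@[simp] lemma blockShift_inr (v : Multiplicative (ZMod k → ZMod p)) (y) :
    blockShift k p r v (Sum.inr y) = Sum.inr y := rfl
@[simp] lemma turn_inl (l : (ZMod p)ˣ) (i x) :
    turn k r l (Sum.inl (i, x)) = Sum.inl (i + 1, twist k l i * x) := rfl
@[simp] lemma turn_inr (l : (ZMod p)ˣ) (y) : turn k r l (Sum.inr y) = Sum.inr y := rfl
@[simp] lemma shift_inl (c : Multiplicative (ZMod r)) (z) :
    shift k p r c (Sum.inl z) = Sum.inl z := rfl
@[simp] lemma shift_inr (c : Multiplicative (ZMod r)) (y) :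
    shift k p r c (Sum.inr y) = Sum.inr (y + c.toAdd) := rfl
@[simp] lemma scale_inl (w : (ZMod r)ˣ) (z) : scale k p r w (Sum.inl z) = Sum.inl z := rfl
@[simp] lemma scale_inr (w : (ZMod r)ˣ) (y) :
    scale k p r w (Sum.inr y) = Sum.inr (w * y) := rfl

lemma turn_pow_inl (l : (ZMod p)ˣ) (j : ℕ) (i : ZMod k) (x : ZMod p) :
    (turn k r l ^ j) (Sum.inl (i, x)) =
      Sum.inl (i + j, ((∏ a ∈ Finset.range j, twist k l (i + a) : (ZMod p)ˣ) : ZMod p) * x) := by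
  induction j with
  | zero => simp
  | succ j ih =>
    rw [pow_succ', Equiv.Perm.mul_apply, ih, turn_inl, Finset.prod_range_succ]
    push_cast
    congr 2 <;> ring

lemma exists_turn_pow_inl [NeZero k] (l : (ZMod p)ˣ) (m : ZMod k) :
    ∃ (j : ℕ) (u : ZMod k → (ZMod p)ˣ), ∀ i x,
      (turn k r l ^ j) (Sum.inl (i, x)) = Sum.inl (i + m, u i * x) :=
  ⟨m.val, _, fun i x => by rw [turn_pow_inl, ZMod.natCast_zmod_val]⟩

@[simp] lemma turn_pow_inr (l : (ZMod p)ˣ) (j : ℕ) (y) :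
    (turn k r l ^ j) (Sum.inr y) = Sum.inr y := by
  induction j with
  | zero => simp
  | succ j ih => rw [pow_succ, Equiv.Perm.mul_apply, turn_inr, ih]

lemma prod_twist [NeZero k] (l : (ZMod p)ˣ) (i : ZMod k) :
    ∏ a ∈ Finset.range k, twist k l (i + a) = l := by
  have h : ∏ a ∈ Finset.range k, twist k l (i + a) = ∏ c : ZMod k, twist k l c :=
    Finset.prod_bij' (fun a _ => i + (a : ZMod k)) (fun c _ => (c - i).val) (by simp)
      (fun c _ => by simpa using ZMod.val_lt _)
      (fun a ha => by simpa using ZMod.val_cast_of_lt (by simpa using ha)) (by simp) (by simp)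
  rw [h]
  simp [twist]

lemma turn_pow_full [NeZero k] (l : (ZMod p)ˣ) (j : ℕ) (i : ZMod k) (x : ZMod p) :
    (turn k r l ^ (k * j)) (Sum.inl (i, x)) = Sum.inl (i, (l : ZMod p) ^ j * x) := by
  induction j with
  | zero => simp
  | succ j ih =>
    rw [Nat.mul_succ, add_comm, pow_add, Equiv.Perm.mul_apply, ih, turn_pow_inl, prod_twist]
    simp [pow_succ', mul_assoc]

lemma turn_pow_eq_one [NeZero k] {l : (ZMod p)ˣ} {m : ℕ} (hl : l ^ m = 1) :
    turn k r l ^ (k * m) = 1 := by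
  ext (⟨i, x⟩ | y)
  · rw [turn_pow_full, ← Units.val_pow_eq_pow_val, hl]
    simp
  · simp

lemma commute_turn_shift (l : (ZMod p)ˣ) (c : Multiplicative (ZMod r)) :
    Commute (turn k r l) (shift k p r c) := by
  ext (⟨i, x⟩ | y) <;> simp

lemma zpowers_shift_ofAdd_one :
    Subgroup.zpowers (shift k p r (.ofAdd 1)) = (shift k p r).range := by
  refine le_antisymm (Subgroup.zpowers_le.2 ⟨_, rfl⟩) ?_
  rintro _ ⟨c, rfl⟩
  obtain ⟨j, hj⟩ := ZMod.intCast_surjective c.toAdd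
  exact ⟨j, by simp [← map_zpow, ← ofAdd_zsmul, hj]⟩

lemma zpowers_turn_mul_shift [NeZero k] {l : (ZMod p)ˣ} {m : ℕ} (hl : l ^ m = 1)
    (hcop : (k * m).Coprime r) :
    Subgroup.zpowers (turn k r l * shift k p r (.ofAdd 1)) =
      Subgroup.zpowers (turn k r l) ⊔ (shift k p r).range := by
  have hshift : shift k p r (.ofAdd 1) ^ r = 1 := by
    rw [← map_pow, ← ofAdd_nsmul]
    simp
  rw [zpowers_mul_eq_sup (commute_turn_shift l _) (turn_pow_eq_one hl) hshift hcop,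
    zpowers_shift_ofAdd_one]

lemma turn_mul_shift_mem_normalizer [NeZero k] [NeZero p] (l : (ZMod p)ˣ)
    (c : Multiplicative (ZMod r)) :
    turn k r l * shift k p r c ∈ Subgroup.normalizer ((blockShift k p r).range : Set _) := by
  have : Finite (Multiplicative (ZMod k → ZMod p)) := inferInstanceAs (Finite (ZMod k → ZMod p))
  refine mem_normalizer_range _ fun v =>
    ⟨.ofAdd fun j => twist k l (j - 1) * v.toAdd (j - 1), ?_⟩
  ext (⟨i, x⟩ | y) <;> simp [mul_add]

lemma scale_mem_normalizer [NeZero k] [NeZero p] [NeZero r] (l : (ZMod p)ˣ) (w : (ZMod r)ˣ) :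
    scale k p r w ∈ Subgroup.normalizer (((blockShift k p r).range ⊔
      (Subgroup.zpowers (turn k r l) ⊔ (shift k p r).range) : Subgroup _) : Set _) := by
  have : Finite (Multiplicative (ZMod k → ZMod p)) := inferInstanceAs (Finite (ZMod k → ZMod p))
  have : Finite (Multiplicative (ZMod r)) := inferInstanceAs (Finite (ZMod r))
  refine Subgroup.normalizer_inf_normalizer_le_normalizer_sup _ _
    ⟨mem_normalizer_range _ fun v => ⟨v, ?_⟩,
      Subgroup.normalizer_inf_normalizer_le_normalizer_sup _ _ ⟨mem_normalizer_zpowers ?_,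
        mem_normalizer_range _ fun c => ⟨.ofAdd (w * c.toAdd), ?_⟩⟩⟩
  · ext (⟨i, x⟩ | y) <;> simp
  · ext (⟨i, x⟩ | y) <;> simp
  · ext (⟨i, x⟩ | y) <;> simp [mul_add]

end Action

section Orbits

variable {k p r : ℕ} {l : (ZMod p)ˣ} {G : SimpleGraph (Vert k p r)}

lemma mul_le_two_mul_ncard_of_adj_inl_inr [NeZero k] [NeZero p] [NeZero r]
    (hblock : (blockShift k p r).range ≤ autSubgroup G) (hturn : turn k r l ∈ autSubgroup G)
    (hshift : (shift k p r).range ≤ autSubgroup G) {i : ZMod k} {x : ZMod p} {y : ZMod r}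
    (h : G.Adj (.inl (i, x)) (.inr y)) : k * p * r ≤ 2 * G.edgeSet.ncard := by
  have hadj (i' x' y') : G.Adj (.inl (i', x')) (.inr y') := by
    obtain ⟨j, u, hu⟩ := exists_turn_pow_inl (r := r) l (i' - i)
    have hj := (adj_iff_of_mem_autSubgroup (pow_mem hturn j)).2 h
    have hy := (adj_iff_of_mem_autSubgroup (hshift ⟨.ofAdd (y' - y), rfl⟩)).2 hj
    have hx := (adj_iff_of_mem_autSubgroup
      (hblock ⟨.ofAdd fun _ => x' - u i * x, rfl⟩)).2 hy
    simpa [hu, -ofAdd_sub] using hx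
  have hcard := card_le_two_mul_ncard_edgeSet (G := G)
    (φ := fun z : (ZMod k × ZMod p) × ZMod r => (.inl z.1, .inr z.2))
    (fun _ _ h => by simpa [Prod.ext_iff] using h) fun z => hadj _ _ _
  simpa [ZMod.card] using hcard

lemma mul_le_two_mul_ncard_of_adj_of_block_ne [NeZero k] [NeZero p] [NeZero r]
    (hblock : (blockShift k p r).range ≤ autSubgroup G) (hturn : turn k r l ∈ autSubgroup G)
    {i i' : ZMod k} (hi : i ≠ i') {x x' : ZMod p}
    (h : G.Adj (.inl (i, x)) (.inl (i', x'))) : k * p * p ≤ 2 * G.edgeSet.ncard := by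
  have hadj (m y y') : G.Adj (.inl (i + m, y)) (.inl (i' + m, y')) := by
    obtain ⟨j, u, hu⟩ := exists_turn_pow_inl (r := r) l m
    have hj := (adj_iff_of_mem_autSubgroup (pow_mem hturn j)).2 h
    have hy := (adj_iff_of_mem_autSubgroup (hblock
      ⟨.ofAdd fun c => if c = i + m then y - u i * x else y' - u i' * x', rfl⟩)).2 hj
    simpa [hu, hi.symm] using hy
  have hcard := card_le_two_mul_ncard_edgeSet (G := G)
    (φ := fun z : (ZMod k × ZMod p) × ZMod p => (.inl (i + z.1.1, z.1.2), .inl (i' + z.1.1, z.2)))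
    (fun _ _ h => by simp_all [Prod.ext_iff]) fun z => hadj _ _ _
  simpa [ZMod.card] using hcard

lemma mul_le_two_mul_ncard_of_adj_of_block_eq [NeZero k] [Fact p.Prime] [NeZero r]
    (hl : ∀ u, u ∈ Subgroup.zpowers l) (hblock : (blockShift k p r).range ≤ autSubgroup G)
    (hturn : turn k r l ∈ autSubgroup G) {i : ZMod k} {x x' : ZMod p}
    (h : G.Adj (.inl (i, x)) (.inl (i, x'))) : k * p * (p - 1) ≤ 2 * G.edgeSet.ncard := by
  have hx : x' - x ≠ 0 := fun h0 => h.ne (by rw [sub_eq_zero.1 h0])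
  have hadj (i' y) (c : (ZMod p)ˣ) : G.Adj (.inl (i', y)) (.inl (i', y + c)) := by
    obtain ⟨m, u, hu⟩ := exists_turn_pow_inl (r := r) l (i' - i)
    obtain ⟨j, hj : l ^ j = _⟩ := mem_powers_iff_mem_zpowers.2
      (hl ((u i)⁻¹ * c * (Units.mk0 _ hx)⁻¹))
    have hdiff : (u i : ZMod p) * ((l : ZMod p) ^ j * (x' - x)) = c := by
      have hunits : u i * (l ^ j * Units.mk0 _ hx) = c := by rw [hj]; group
      simpa using congrArg Units.val hunits
    have h₀ := (adj_iff_of_mem_autSubgroup (hblock ⟨.ofAdd fun _ => -x, rfl⟩)).2 h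
    have hj := (adj_iff_of_mem_autSubgroup (pow_mem hturn (k * j))).2 h₀
    have hm := (adj_iff_of_mem_autSubgroup (pow_mem hturn m)).2 hj
    have hy := (adj_iff_of_mem_autSubgroup (hblock ⟨.ofAdd fun _ => y, rfl⟩)).2 hm
    simpa [turn_pow_full, hu, ← sub_eq_add_neg, hdiff, add_comm] using hy
  have hcard := card_le_two_mul_ncard_edgeSet (G := G)
    (φ := fun z : (ZMod k × ZMod p) × (ZMod p)ˣ =>
      (.inl z.1, .inl (z.1.1, z.1.2 + z.2)))
    (fun ⟨⟨i, x⟩, c⟩ ⟨⟨j, y⟩, d⟩ h => by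
      obtain ⟨⟨rfl, rfl⟩, -, hcd⟩ : (i = j ∧ x = y) ∧ i = j ∧ x + c = y + d := by simpa using h
      simpa [Units.ext_iff] using hcd) fun z => hadj _ _ _
  simpa [ZMod.card, ZMod.card_units_eq_totient, Nat.totient_prime Fact.out] using hcard

lemma mul_orderOf_le_two_mul_ncard_of_adj_inr_inr [NeZero k] [NeZero p] [Fact r.Prime]
    {w : (ZMod r)ˣ} (hshift : (shift k p r).range ≤ autSubgroup G)
    (hscale : scale k p r w ∈ autSubgroup G) {y y' : ZMod r}
    (h : G.Adj (.inr y) (.inr y')) : r * orderOf w ≤ 2 * G.edgeSet.ncard := by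
  have hy : y' - y ≠ 0 := fun h0 => h.ne (by rw [sub_eq_zero.1 h0])
  have hadj (c) (u : Subgroup.zpowers w) :
      G.Adj (.inr c) (.inr (c + (u : (ZMod r)ˣ) * (y' - y))) := by
    have h₀ := (adj_iff_of_mem_autSubgroup (hshift ⟨.ofAdd (-y), rfl⟩)).2 h
    have hu : scale k p r u ∈ autSubgroup G := by
      obtain ⟨j, hj⟩ := u.2
      simpa [← hj] using zpow_mem hscale j
    have hu := (adj_iff_of_mem_autSubgroup hu).2 h₀
    have hc := (adj_iff_of_mem_autSubgroup (hshift ⟨.ofAdd c, rfl⟩)).2 hu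
    simpa [← sub_eq_add_neg, add_comm, -ofAdd_neg] using hc
  have hcard := card_le_two_mul_ncard_edgeSet (G := G)
    (φ := fun z : ZMod r × Subgroup.zpowers w =>
      (.inr z.1, .inr (z.1 + (z.2 : (ZMod r)ˣ) * (y' - y))))
    (fun ⟨c, u⟩ ⟨d, v⟩ h => by
      obtain ⟨hcd, huv⟩ := Prod.ext_iff.1 h
      obtain rfl := Sum.inr.inj hcd
      have huv := mul_right_cancel₀ hy (add_left_cancel (Sum.inr.inj huv))
      exact Prod.ext rfl (Subtype.ext (Units.ext huv))) fun z => hadj _ _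
  simpa [ZMod.card, Fintype.card_zpowers] using hcard

lemma min_le_two_mul_ncard_edgeSet [NeZero k] [Fact p.Prime] [Fact r.Prime] {w : (ZMod r)ˣ}
    (hl : ∀ u, u ∈ Subgroup.zpowers l) (hpr : p ≤ r) (hG : G ≠ ⊥)
    (hblock : (blockShift k p r).range ≤ autSubgroup G) (hturn : turn k r l ∈ autSubgroup G)
    (hshift : (shift k p r).range ≤ autSubgroup G) (hscale : scale k p r w ∈ autSubgroup G) :
    min (r * orderOf w) (k * p * (p - 1)) ≤ 2 * G.edgeSet.ncard := by
  have hcross {i x y} (h : G.Adj (.inl (i, x)) (.inr y)) :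
      k * p * (p - 1) ≤ 2 * G.edgeSet.ncard :=
    (Nat.mul_le_mul_left _ ((Nat.sub_le _ _).trans hpr)).trans
      (mul_le_two_mul_ncard_of_adj_inl_inr hblock hturn hshift h)
  obtain ⟨⟨i, x⟩ | y, ⟨i', x'⟩ | y', h⟩ := SimpleGraph.ne_bot_iff_exists_adj.1 hG
  · refine (min_le_right _ _).trans ?_
    obtain rfl | hi := eq_or_ne i i'
    · exact mul_le_two_mul_ncard_of_adj_of_block_eq hl hblock hturn h
    · exact (Nat.mul_le_mul_left _ (Nat.sub_le _ _)).trans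
        (mul_le_two_mul_ncard_of_adj_of_block_ne hblock hturn hi h)
  · exact (min_le_right _ _).trans (hcross h)
  · exact (min_le_right _ _).trans (hcross h.symm)
  · exact (min_le_left _ _).trans (mul_orderOf_le_two_mul_ncard_of_adj_inr_inr hshift hscale h)

theorem exists_mem_min_le_two_mul_ncard_edgeSet {n q : ℕ} {P : Set (SimpleGraph (Fin n))}
    (hP : IsGraphProperty P) (hmono : MonotoneDecreasing P) (hne : P.Nonempty) (hev : ¬Evasive P)
    (hk : 0 < k) (hp : p.Prime) (hr : r.Prime) (hq : q.Prime) (hn : n = k * p + r) (hkr : k < r)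
    (hpr : p ≤ r) (hqr : q ∣ r - 1) :
    ∃ G ∈ P, min (r * q) (k * p * (p - 1)) ≤ 2 * G.edgeSet.ncard := by
  have := Fact.mk hp
  have := Fact.mk hr
  have := Fact.mk hq
  have : NeZero k := ⟨hk.ne'⟩
  obtain ⟨l, hl⟩ := IsCyclic.exists_generator (α := (ZMod p)ˣ)
  obtain ⟨w, rfl⟩ := exists_prime_orderOf_dvd_card (G := (ZMod r)ˣ) q (by
    rwa [ZMod.card_units_eq_totient, Nat.totient_prime hr])
  have hcop : (k * (p - 1)).Coprime r := by
    have hpred : (p - 1).Coprime r := (Nat.coprime_of_lt_prime (Nat.sub_ne_zero_of_lt hp.one_lt)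
      ((Nat.sub_lt hp.pos one_pos).trans_le hpr) hr).symm
    exact (Nat.coprime_of_lt_prime hk.ne' hkr hr).symm.mul_left hpred
  have hzpowers := zpowers_turn_mul_shift (r := r) (ZMod.units_pow_card_sub_one_eq_one p l) hcop
  have hcard : Fintype.card (Vert k p r) = n := by simp [ZMod.card, hn]
  let f := Fintype.equivFinOfCardEq hcard
  obtain ⟨G, hGP, hG, hle, hscale⟩ := exists_le_autSubgroup_of_not_evasive f hP hmono hne hev
    (p := p) (q := orderOf w) (A := (blockShift k p r).range)
    (σ := turn k r l * shift k p r (.ofAdd 1)) (τ := scale k p r w)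
    (by rintro _ ⟨v, rfl⟩; rw [← map_pow, ← ofAdd_toAdd v, ← ofAdd_nsmul]; simp)
    (by rintro _ ⟨v, rfl⟩ _ ⟨v', rfl⟩; rw [← map_mul, mul_comm, map_mul])
    (turn_mul_shift_mem_normalizer l _) (hzpowers ▸ scale_mem_normalizer l w)
    (by rw [← map_pow, pow_orderOf_eq_one, map_one])
  rw [hzpowers, sup_le_iff, sup_le_iff, Subgroup.zpowers_le] at hle
  obtain ⟨hblock, hturn, hshift⟩ := hle
  exact ⟨_, hGP, ncard_edgeSet_relabel f G ▸
    min_le_two_mul_ncard_edgeSet hl hpr hG hblock hturn hshift hscale⟩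

end Orbits

/-! ### Dirichlet L-functions -/

section LogDeriv

open Complex Metric

lemma exists_exp_eq_of_ne_zero_on_ball {h : ℂ → ℂ} {c : ℂ} {R : ℝ} (hR : 0 < R)
    (hd : DifferentiableOn ℂ h (ball c R)) (hz : ∀ z ∈ ball c R, h z ≠ 0) :
    ∃ l : ℂ → ℂ, l c = 0 ∧ (∀ z ∈ ball c R, HasDerivAt l (logDeriv h z) z) ∧
      ∀ z ∈ ball c R, h z = h c * exp (l z) := by
  have hc : c ∈ ball c R := mem_ball_self hR
  have hlog : DifferentiableOn ℂ (logDeriv h) (ball c R) := (hd.deriv isOpen_ball).div hd hz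
  obtain ⟨l, hl₀, hl⟩ := hlog.isExactOn_ball.with_val_at c 0
  have hexp (z) (hzR : z ∈ ball c R) : HasDerivAt (exp ∘ l) (exp (l z) * logDeriv h z) z :=
    (hl z hzR).cexp
  obtain ⟨a, -, ha⟩ := (logDeriv_eqOn_iff (g := exp ∘ l) hd
    (fun z hzR => (hexp z hzR).differentiableAt.differentiableWithinAt) isOpen_ball
    (convex_ball c R).isPreconnected (fun z _ => exp_ne_zero (l z)) hz).1 fun z hzR => by
      rw [logDeriv_apply (exp ∘ l), (hexp z hzR).deriv]
      exact (mul_div_cancel_left₀ _ (exp_ne_zero _)).symm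
  obtain rfl : h c = a := by simpa [hl₀] using ha hc
  exact ⟨l, hl₀, hl, fun z hzR => ha hzR⟩

/-- The logarithm of `h / h c` has real part at most `M`, so Borel–Carathéodory bounds it and
Cauchy's estimate bounds its derivatives. -/
lemma norm_iteratedDeriv_logDeriv_le {h : ℂ → ℂ} {c : ℂ} {R r M : ℝ} (hr : 0 < r) (hrR : r < R)
    (hM : 0 < M) (hd : DifferentiableOn ℂ h (ball c R)) (hz : ∀ z ∈ ball c R, h z ≠ 0)
    (hb : ∀ z ∈ ball c R, ‖h z‖ ≤ Real.exp M * ‖h c‖) (k : ℕ) :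
    ‖iteratedDeriv k (logDeriv h) c‖ ≤
      (k + 1).factorial * (2 * M / (R - r)) / r ^ k := by
  have hR : 0 < R := hr.trans hrR
  have hc : c ∈ ball c R := mem_ball_self hR
  obtain ⟨l, hl₀, hl, hexp⟩ := exists_exp_eq_of_ne_zero_on_ball hR hd hz
  have hldiff : DifferentiableOn ℂ l (ball c R) :=
    fun z hzR => (hl z hzR).differentiableAt.differentiableWithinAt
  have hre (z) (hzR : z ∈ ball c R) : (l z).re ≤ M := by
    have hzb := hb z hzR
    rw [hexp z hzR, norm_mul, norm_exp, mul_comm] at hzb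
    exact Real.exp_le_exp.1 (le_of_mul_le_mul_right hzb (norm_pos_iff.2 (hz c hc)))
  have hmem (w) (hw : w ∈ ball (0 : ℂ) R) : c + w ∈ ball c R := by
    simpa [mem_ball, dist_eq_norm] using hw
  have hborel (z) (hzr : z ∈ sphere c r) : ‖l z‖ ≤ 2 * M * r / (R - r) := by
    have hnorm : ‖z - c‖ = r := by simpa [dist_eq_norm] using hzr
    have := borelCaratheodory_zero (f := fun w => l (c + w)) (z := z - c) hM
      (hldiff.comp (differentiable_id.const_add c).differentiableOn hmem)
      (fun w hw => hre _ (hmem w hw)) hR (by simpa [hnorm] using hrR) (by simpa using hl₀)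
    simpa [hnorm] using this
  have hcauchy := norm_iteratedDeriv_le_of_forall_mem_sphere_norm_le (k + 1) hr
    ((hldiff.mono (closedBall_subset_ball hrR)).diffContOnCl_ball subset_rfl) hborel
  have heq : deriv l =ᶠ[nhds c] logDeriv h :=
    Filter.eventually_of_mem (isOpen_ball.mem_nhds hc) fun z hzR => (hl z hzR).deriv
  rw [iteratedDeriv_succ', heq.iteratedDeriv_eq] at hcauchy
  exact hcauchy.trans_eq (by rw [pow_succ]; field_simp)

end LogDeriv

section CharacterSum

open Complex Set Filter MeasureTheory Topology

variable {m : ℕ}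

/-- The summatory function of a Dirichlet character on the real line. It is cut off below `1` so
that its Mellin transform is an integral over `(1, ∞)`. -/
noncomputable def characterSum (χ : DirichletCharacter ℂ m) : ℝ → ℂ :=
  (Ioi 1).indicator fun t => ∑ k ∈ Finset.Icc 1 ⌊t⌋₊, χ k

lemma measurable_characterSum (χ : DirichletCharacter ℂ m) : Measurable (characterSum χ) :=
  (measurable_from_nat (f := fun n : ℕ => ∑ k ∈ Finset.Icc 1 n, χ k) |>.comp
    Nat.measurable_floor).indicator measurableSet_Ioi

lemma mellin_characterSum_neg (χ : DirichletCharacter ℂ m) (s : ℂ) :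
    mellin (characterSum χ) (-s) =
      ∫ t in Ioi (1 : ℝ), (∑ k ∈ Finset.Icc 1 ⌊t⌋₊, χ k) * (t : ℂ) ^ (-(s + 1)) := by
  have hindicator (t : ℝ) : (t : ℂ) ^ (-s - 1) • characterSum χ t = (Ioi (1 : ℝ)).indicator
      (fun t : ℝ => (∑ k ∈ Finset.Icc 1 ⌊t⌋₊, χ k) * (t : ℂ) ^ (-(s + 1))) t := by
    by_cases ht : t ∈ Ioi (1 : ℝ)
    · rw [characterSum, indicator_of_mem ht, indicator_of_mem ht, smul_eq_mul, mul_comm, neg_add']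
    · rw [characterSum, indicator_of_notMem ht, indicator_of_notMem ht, smul_zero]
  simp only [mellin, hindicator]
  rw [setIntegral_indicator measurableSet_Ioi,
    inter_eq_self_of_subset_right (Ioi_subset_Ioi zero_le_one)]

variable [NeZero m]

lemma sum_range_natCast_zmod {M : Type*} [AddCommMonoid M] (f : ZMod m → M) :
    ∑ k ∈ Finset.range m, f k = ∑ a, f a :=
  Finset.sum_nbij' (↑) ZMod.val (by simp) (fun a _ => Finset.mem_range.2 a.val_lt)
    (fun k hk => ZMod.val_cast_of_lt (Finset.mem_range.1 hk)) (by simp) (by simp)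

variable {χ : DirichletCharacter ℂ m}

lemma norm_sum_range_character_le (hχ : χ ≠ 1) (N : ℕ) : ‖∑ k ∈ Finset.range N, χ k‖ ≤ m := by
  induction N using Nat.strong_induction_on with
  | _ N ih =>
    by_cases hN : N < m
    · refine (norm_sum_le_of_le _ fun k _ => χ.norm_le_one _).trans ?_
      simpa using hN.le
    · obtain ⟨N, rfl⟩ := Nat.exists_eq_add_of_le (not_lt.1 hN)
      rw [Finset.sum_range_add, sum_range_natCast_zmod, MulChar.sum_eq_zero_of_ne_one hχ, zero_add]
      simpa using ih N (Nat.lt_add_of_pos_left (NeZero.pos m))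

lemma norm_sum_Icc_character_le (hχ : χ ≠ 1) (N : ℕ) :
    ‖∑ k ∈ Finset.Icc 1 N, χ k‖ ≤ 2 * m := by
  have hsplit : ∑ k ∈ Finset.Icc 1 N, χ k = ∑ k ∈ Finset.range (N + 1), χ k - χ 0 := by
    rw [Finset.sum_range_eq_add_Ico _ N.succ_pos, Nat.cast_zero, add_sub_cancel_left]
    rfl
  have hm : (1 : ℝ) ≤ m := by exact_mod_cast NeZero.one_le
  calc ‖∑ k ∈ Finset.Icc 1 N, χ k‖ ≤ ‖∑ k ∈ Finset.range (N + 1), χ k‖ + ‖χ 0‖ :=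
        hsplit ▸ norm_sub_le _ _
    _ ≤ m + 1 := add_le_add (norm_sum_range_character_le hχ _) (χ.norm_le_one 0)
    _ ≤ 2 * m := by linarith

lemma norm_characterSum_le (hχ : χ ≠ 1) (t : ℝ) : ‖characterSum χ t‖ ≤ 2 * m :=
  (norm_indicator_le_norm_self _ _).trans (norm_sum_Icc_character_le hχ _)

lemma norm_mellin_characterSum_neg_le (hχ : χ ≠ 1) {s : ℂ} (hs : 0 < s.re) :
    ‖mellin (characterSum χ) (-s)‖ ≤ 2 * m / s.re := by
  have hlt : -(s.re + 1) < -1 := by linarith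
  have hintegrable : IntegrableOn (fun t : ℝ => 2 * (m : ℝ) * t ^ (-(s.re + 1))) (Ioi 1) :=
    (integrableOn_Ioi_rpow_of_lt hlt one_pos).const_mul _
  have hbound (t : ℝ) (ht : t ∈ Ioi 1) :
      ‖(∑ k ∈ Finset.Icc 1 ⌊t⌋₊, χ k) * (t : ℂ) ^ (-(s + 1))‖ ≤
        2 * m * t ^ (-(s.re + 1)) := by
    rw [norm_mul, norm_cpow_eq_rpow_re_of_pos (one_pos.trans ht), neg_re, add_re, one_re]
    gcongr
    · exact Real.rpow_nonneg (one_pos.trans ht).le _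
    · exact norm_sum_Icc_character_le hχ _
  rw [mellin_characterSum_neg]
  calc _ ≤ ∫ t in Ioi (1 : ℝ), 2 * (m : ℝ) * t ^ (-(s.re + 1)) :=
        norm_integral_le_of_norm_le hintegrable
          ((ae_restrict_iff' measurableSet_Ioi).2 (.of_forall hbound))
    _ = 2 * m / s.re := by
        rw [integral_const_mul, integral_Ioi_rpow_of_lt hlt one_pos, Real.one_rpow,
          neg_add, neg_add_cancel_right, neg_div_neg_eq, mul_one_div]

lemma differentiableAt_mellin_characterSum (hχ : χ ≠ 1) {s : ℂ} (hs : s.re < 0) :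
    DifferentiableAt ℂ (mellin (characterSum χ)) s := by
  refine mellin_differentiableAt_of_isBigO_rpow (a := 0) (b := s.re - 1) ?_ ?_ hs ?_ (by linarith)
  · refine LocallyIntegrable.locallyIntegrableOn ?_ _
    refine (locallyIntegrable_const (2 * (m : ℝ))).mono
      (measurable_characterSum χ).aestronglyMeasurable (.of_forall fun t => ?_)
    exact (norm_characterSum_le hχ t).trans (Real.le_norm_self _)
  · exact .of_bound (2 * m) (.of_forall fun t => by simpa using norm_characterSum_le hχ t)
  · have hzero : characterSum χ =ᶠ[𝓝[>] 0] fun _ => 0 := by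
      filter_upwards [mem_nhdsWithin_of_mem_nhds (Iio_mem_nhds one_pos)] with t ht
      exact indicator_of_notMem (not_lt.2 (mem_Iio.1 ht).le) _
    exact hzero.trans_isBigO (Asymptotics.isBigO_zero _ _)

lemma LFunction_eq_mul_mellin_characterSum (hχ : χ ≠ 1) {s : ℂ} (hs : 0 < s.re) :
    χ.LFunction s = s * mellin (characterSum χ) (-s) := by
  have hopen : IsOpen {s : ℂ | 0 < s.re} := isOpen_lt continuous_const continuous_re
  have hL : AnalyticOnNhd ℂ χ.LFunction {s : ℂ | 0 < s.re} :=
    (DirichletCharacter.differentiable_LFunction hχ).differentiableOn.analyticOnNhd hopen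
  have hmellin : AnalyticOnNhd ℂ (fun s => s * mellin (characterSum χ) (-s))
      {s : ℂ | 0 < s.re} := by
    refine DifferentiableOn.analyticOnNhd (fun z hz => ?_) hopen
    have hz' : (-z).re < 0 := by simpa using hz
    exact (differentiableAt_id.mul ((differentiableAt_mellin_characterSum hχ hz').comp z
      differentiableAt_id.neg)).differentiableWithinAt
  have hnear : {s : ℂ | 1 < s.re} ∈ 𝓝 (2 : ℂ) :=
    (isOpen_lt continuous_const continuous_re).mem_nhds (by simp)
  refine hL.eqOn_of_preconnected_of_eventuallyEq hmellin
    (convex_halfSpace_re_gt 0).isPreconnected (z₀ := 2) (by simp) ?_ hs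
  filter_upwards [hnear] with z hz
  replace hz : 1 < z.re := hz
  rw [DirichletCharacter.LFunction_eq_LSeries χ hz, mellin_characterSum_neg,
    LSeries_eq_mul_integral (fun n => χ n) le_rfl (zero_lt_one.trans hz)
      (χ.LSeriesSummable_of_one_lt_re hz)]
  exact .of_bound (2 * m) (.of_forall fun t => by simpa using norm_sum_Icc_character_le hχ t)

lemma norm_LFunction_le (hχ : χ ≠ 1) {s : ℂ} (hs : 0 < s.re) :
    ‖χ.LFunction s‖ ≤ ‖s‖ * (2 * m / s.re) := by
  rw [LFunction_eq_mul_mellin_characterSum hχ hs, norm_mul]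
  gcongr
  exact norm_mellin_characterSum_neg_le hχ hs

end CharacterSum

section EntireLFunction

open Complex Metric Topology DirichletCharacter
open scoped ArithmeticFunction.Moebius
open scoped LSeries.notation

lemma LFunctionTrivChar₁_eq_prod_mul (m : ℕ) [NeZero m] (s : ℂ) :
    LFunctionTrivChar₁ m s =
      (∏ p ∈ m.primeFactors, (1 - (p : ℂ) ^ (-s))) * LFunctionTrivChar₁ 1 s := by
  rcases eq_or_ne s 1 with rfl | hs
  · simp [cpow_neg_one]
  · simp only [LFunctionTrivChar₁, Function.update_of_ne hs,
      LFunctionTrivChar_eq_mul_riemannZeta hs, Nat.primeFactors_one, Finset.prod_empty]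
    ring

lemma norm_prod_primeFactors_one_sub_cpow_le {m : ℕ} (hm : m ≠ 0) {s : ℂ} (hs : 0 ≤ s.re) :
    ‖∏ p ∈ m.primeFactors, (1 - (p : ℂ) ^ (-s))‖ ≤ m := by
  have hfactor (p) (hp : p ∈ m.primeFactors) : ‖1 - (p : ℂ) ^ (-s)‖ ≤ p := by
    have hprime := Nat.prime_of_mem_primeFactors hp
    have htwo : (2 : ℝ) ≤ p := by exact_mod_cast hprime.two_le
    calc ‖1 - (p : ℂ) ^ (-s)‖ ≤ ‖(1 : ℂ)‖ + ‖(p : ℂ) ^ (-s)‖ := norm_sub_le _ _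
      _ ≤ 1 + 1 := by
        rw [norm_one, norm_natCast_cpow_of_pos hprime.pos, neg_re]
        gcongr
        exact Real.rpow_le_one_of_one_le_of_nonpos (by linarith) (by linarith)
      _ ≤ p := by linarith
  calc _ = ∏ p ∈ m.primeFactors, ‖1 - (p : ℂ) ^ (-s)‖ := norm_prod _ _
    _ ≤ ∏ p ∈ m.primeFactors, (p : ℝ) := Finset.prod_le_prod (fun _ _ => norm_nonneg _) hfactor
    _ ≤ m := by
      rw [← Nat.cast_prod]
      exact_mod_cast Nat.le_of_dvd hm.bot_lt (Nat.prod_primeFactors_dvd m)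

lemma one_le_tsum_mul_norm_LFunction {m : ℕ} [NeZero m] (χ : DirichletCharacter ℂ m) {s : ℂ}
    (hs : 1 < s.re) : 1 ≤ (∑' n, ‖LSeries.term 1 s n‖) * ‖χ.LFunction s‖ := by
  have hsum : Summable fun n => ‖LSeries.term 1 s n‖ := (LSeriesSummable_one_iff.2 hs).norm
  have hle (n) : ‖LSeries.term (↗χ * ↗ArithmeticFunction.moebius) s n‖ ≤
      ‖LSeries.term 1 s n‖ := by
    refine LSeries.norm_term_le _ ?_
    simp only [Pi.mul_apply, norm_mul, Pi.one_apply, norm_one]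
    refine mul_le_one₀ (χ.norm_le_one _) (norm_nonneg _) ?_
    rw [norm_intCast]
    exact_mod_cast ArithmeticFunction.abs_moebius_le_one
  have hmoebius : ‖LSeries (↗χ * ↗ArithmeticFunction.moebius) s‖ ≤
      ∑' n, ‖LSeries.term 1 s n‖ := by
    have hsum' := Summable.of_nonneg_of_le (fun _ => norm_nonneg _) hle hsum
    exact (norm_tsum_le_tsum_norm hsum').trans (hsum'.tsum_le_tsum hle hsum)
  calc 1 = ‖LSeries (↗χ * ↗ArithmeticFunction.moebius) s‖ * ‖χ.LFunction s‖ := by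
        rw [← norm_mul, LFunction_eq_LSeries χ hs, mul_comm, LSeries.mul_mu_eq_one χ hs, norm_one]
    _ ≤ _ := by gcongr

variable {m : ℕ} [NeZero m] {χ : DirichletCharacter ℂ m}

/-- The `L`-function of a Dirichlet character, multiplied by `s - 1` if the character is trivial so
that it is entire in every case. -/
noncomputable def entireLFunction (χ : DirichletCharacter ℂ m) : ℂ → ℂ :=
  open Classical in if χ = 1 then LFunctionTrivChar₁ m else χ.LFunction

lemma entireLFunction_one : entireLFunction (1 : DirichletCharacter ℂ m) = LFunctionTrivChar₁ m :=
  if_pos rfl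

lemma entireLFunction_of_ne_one (hχ : χ ≠ 1) : entireLFunction χ = χ.LFunction :=
  if_neg hχ

lemma entireLFunction_one_apply {z : ℂ} (hz : z ≠ 1) :
    entireLFunction (1 : DirichletCharacter ℂ m) z =
      (z - 1) * (1 : DirichletCharacter ℂ m).LFunction z := by
  rw [entireLFunction_one, LFunctionTrivChar₁, Function.update_of_ne hz]

variable (χ) in
lemma differentiable_entireLFunction : Differentiable ℂ (entireLFunction χ) := by
  rcases eq_or_ne χ 1 with rfl | hχ
  · exact entireLFunction_one (m := m) ▸ differentiable_LFunctionTrivChar₁ m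
  · exact entireLFunction_of_ne_one hχ ▸ differentiable_LFunction hχ

lemma norm_LFunction_le_norm_entireLFunction {c : ℝ} (hc : 2 ≤ c) :
    ‖χ.LFunction c‖ ≤ ‖entireLFunction χ c‖ := by
  rcases eq_or_ne χ 1 with rfl | hχ
  · have hc₁ : (c : ℂ) ≠ 1 := by exact_mod_cast (by linarith : c ≠ 1)
    rw [entireLFunction_one_apply hc₁, norm_mul]
    refine le_mul_of_one_le_left (norm_nonneg _) ?_
    rw [← ofReal_one, ← ofReal_sub, norm_real]
    exact (Real.le_norm_self _).trans' (by linarith)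
  · rw [entireLFunction_of_ne_one hχ]

lemma exists_norm_entireLFunction_le {x : ℝ} (hx : 0 < x) (R : ℝ) :
    ∃ K : ℝ, 0 ≤ K ∧ ∀ (m : ℕ) [NeZero m] (χ : DirichletCharacter ℂ m) (z : ℂ),
      x ≤ z.re → ‖z‖ ≤ R → ‖entireLFunction χ z‖ ≤ K * m := by
  obtain ⟨K, hK⟩ := (isCompact_closedBall (0 : ℂ) R).exists_bound_of_continuousOn
    (differentiable_LFunctionTrivChar₁ 1).continuous.continuousOn
  refine ⟨max 0 (max K (R * (2 / x))), le_max_left _ _, fun m _ χ z hxz hzR => ?_⟩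
  have hre : 0 < z.re := hx.trans_le hxz
  rcases eq_or_ne χ 1 with rfl | hχ
  · rw [entireLFunction_one, LFunctionTrivChar₁_eq_prod_mul, norm_mul]
    calc _ ≤ (m : ℝ) * K := by
          gcongr
          · exact norm_prod_primeFactors_one_sub_cpow_le (NeZero.ne m) hre.le
          · exact hK z (mem_closedBall_zero_iff.2 hzR)
      _ ≤ max 0 (max K (R * (2 / x))) * m := by
          rw [mul_comm]
          gcongr
          exact (le_max_left _ _).trans (le_max_right _ _)
  · rw [entireLFunction_of_ne_one hχ]
    calc _ ≤ ‖z‖ * (2 * m / z.re) := norm_LFunction_le hχ hre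
      _ ≤ R * (2 * m / x) := by gcongr; exact (norm_nonneg z).trans hzR
      _ = R * (2 / x) * m := by ring
      _ ≤ max 0 (max K (R * (2 / x))) * m := by
          gcongr
          exact (le_max_right _ _).trans (le_max_right _ _)

lemma sub_lt_re_of_mem_ball {c : ℝ} {r : ℝ} {z : ℂ} (hz : z ∈ ball (c : ℂ) r) :
    c - r < z.re := by
  have habs := (abs_re_le_norm (z - c)).trans_lt (mem_ball_iff_norm.1 hz)
  rw [sub_re, ofReal_re] at habs
  linarith [(abs_lt.1 habs).1]

lemma exists_norm_entireLFunction_le_mul_norm {c : ℝ} (hc : 2 ≤ c) :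
    ∃ C : ℝ, 1 < C ∧ ∀ (m : ℕ) [NeZero m] (χ : DirichletCharacter ℂ m),
      ∀ z ∈ ball (c : ℂ) (c - 1 / 2), ‖entireLFunction χ z‖ ≤ C * m * ‖entireLFunction χ c‖ := by
  obtain ⟨K, hK₀, hK⟩ := exists_norm_entireLFunction_le one_half_pos (2 * c)
  set S := ∑' n, ‖LSeries.term 1 (c : ℂ) n‖
  refine ⟨max 2 (K * S), one_lt_two.trans_le (le_max_left _ _), fun m _ χ z hz => ?_⟩
  have hre : 1 / 2 ≤ z.re := by linarith [sub_lt_re_of_mem_ball hz]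
  have hnorm : ‖z‖ ≤ 2 * c := by
    have hsub := mem_ball_iff_norm.1 hz
    have htri := norm_le_norm_add_norm_sub' z c
    rw [norm_real, Real.norm_of_nonneg (by linarith)] at htri
    linarith
  have hlower : 1 ≤ S * ‖entireLFunction χ c‖ :=
    (one_le_tsum_mul_norm_LFunction χ (ofReal_re c ▸ one_lt_two.trans_le hc)).trans <| by
      gcongr
      exact norm_LFunction_le_norm_entireLFunction hc
  calc ‖entireLFunction χ z‖ ≤ K * m := hK m χ z hre hnorm
    _ ≤ K * m * (S * ‖entireLFunction χ c‖) := le_mul_of_one_le_right (by positivity) hlower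
    _ = K * S * m * ‖entireLFunction χ c‖ := by ring
    _ ≤ max 2 (K * S) * m * ‖entireLFunction χ c‖ := by gcongr; exact le_max_right _ _

variable (χ) in
lemma entireLFunction_ne_zero_of_one_le_re {z : ℂ} (hz : 1 ≤ z.re) : entireLFunction χ z ≠ 0 := by
  rcases eq_or_ne χ 1 with rfl | hχ
  · rcases eq_or_ne z 1 with rfl | hz₁
    · exact entireLFunction_one (m := m) ▸ LFunctionTrivChar₁_apply_one_ne_zero m
    · rw [entireLFunction_one_apply hz₁]
      exact mul_ne_zero (sub_ne_zero_of_ne hz₁) (LFunction_ne_zero_of_one_le_re 1 (.inr hz₁) hz)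
  · rw [entireLFunction_of_ne_one hχ]
    exact LFunction_ne_zero_of_one_le_re χ (.inl hχ) hz

variable (χ) in
lemma entireLFunction_ne_zero_of_half_lt_re (erh : ExtendedRiemannHypothesis) {z : ℂ}
    (hz : 1 / 2 < z.re) : entireLFunction χ z ≠ 0 := by
  rcases le_or_gt 1 z.re with hle | hlt
  · exact entireLFunction_ne_zero_of_one_le_re χ hle
  have hL : χ.LFunction z ≠ 0 := fun h => hz.ne' (erh m χ z (by linarith) hlt h)
  rcases eq_or_ne χ 1 with rfl | hχ
  · have hz₁ : z ≠ 1 := by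
      rintro rfl
      exact hlt.ne one_re
    rw [entireLFunction_one_apply hz₁]
    exact mul_ne_zero (sub_ne_zero_of_ne hz₁) hL
  · rwa [entireLFunction_of_ne_one hχ]

lemma exists_norm_iteratedDeriv_logDeriv_entireLFunction_le (erh : ExtendedRiemannHypothesis)
    {c : ℝ} (hc : 2 ≤ c) :
    ∃ C : ℝ, 1 < C ∧ ∀ (m : ℕ) [NeZero m] (χ : DirichletCharacter ℂ m) (r : ℝ) (k : ℕ),
      0 < r → r < c - 1 / 2 →
      ‖iteratedDeriv k (logDeriv (entireLFunction χ)) c‖ ≤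
        (k + 1).factorial * (2 * Real.log (C * m) / (c - 1 / 2 - r)) / r ^ k := by
  obtain ⟨C, hC, hbound⟩ := exists_norm_entireLFunction_le_mul_norm hc
  refine ⟨C, hC, fun m _ χ r k hr hrc => ?_⟩
  have hm : (1 : ℝ) ≤ m := by exact_mod_cast NeZero.one_le
  have hCm : 1 < C * m := one_lt_mul_of_lt_of_le hC hm
  refine norm_iteratedDeriv_logDeriv_le hr hrc (Real.log_pos hCm)
    (differentiable_entireLFunction χ).differentiableOn
    (fun z hz => entireLFunction_ne_zero_of_half_lt_re χ erh ?_) (fun z hz => ?_) k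
  · linarith [sub_lt_re_of_mem_ball hz]
  · rw [Real.exp_log (one_pos.trans hCm)]
    exact hbound m χ z hz

end EntireLFunction

section ResidueClassMoment

open Complex Filter Topology DirichletCharacter
open ArithmeticFunction ArithmeticFunction.vonMangoldt
open scoped Nat
open scoped LSeries.notation

variable {m : ℕ}

/-- The sum of `Λ(n) (log n)ᵏ n⁻ˢ` over `n ≡ a`, which up to sign is the `k`-th derivative of the
Dirichlet series of the von Mangoldt function on a residue class. -/
noncomputable def residueClassMoment (a : ZMod m) (k : ℕ) (s : ℝ) : ℝ :=
  ∑' n : ℕ, residueClass a n * Real.log n ^ k * (n : ℝ) ^ (-s)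

lemma logMul_iterate_apply (f : ℕ → ℂ) (k n : ℕ) :
    (LSeries.logMul^[k] f) n = Complex.log n ^ k * f n := by
  induction k with
  | zero => simp
  | succ k ih => rw [Function.iterate_succ_apply', LSeries.logMul, ih]; ring

lemma term_logMul_residueClass (a : ZMod m) (k : ℕ) (s : ℝ) (n : ℕ) :
    LSeries.term (LSeries.logMul^[k] ↗(residueClass a)) s n =
      ((residueClass a n * Real.log n ^ k * (n : ℝ) ^ (-s) : ℝ) : ℂ) := by
  rcases eq_or_ne n 0 with rfl | hn
  · simp
  · rw [LSeries.term_of_ne_zero hn, logMul_iterate_apply, div_eq_mul_inv, ← cpow_neg]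
    push_cast
    rw [ofReal_cpow n.cast_nonneg]
    push_cast
    ring

lemma summable_residueClass_log_pow (a : ZMod m) (k : ℕ) {s : ℝ} (hs : 1 < s) :
    Summable fun n : ℕ => residueClass a n * Real.log n ^ k * (n : ℝ) ^ (-s) := by
  have hsummable : LSeriesSummable (LSeries.logMul^[k] ↗(residueClass a)) s := by
    refine LSeriesSummable_of_abscissaOfAbsConv_lt_re ?_
    rw [LSeries.absicssaOfAbsConv_logPowMul]
    exact (abscissaOfAbsConv_residueClass_le_one a).trans_lt (by exact_mod_cast hs)
  rw [LSeriesSummable, funext (term_logMul_residueClass a k s)] at hsummable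
  exact_mod_cast hsummable

lemma ofReal_residueClassMoment (a : ZMod m) (k : ℕ) {s : ℝ} (hs : 1 < s) :
    (residueClassMoment a k s : ℂ) =
      (-1) ^ k * iteratedDeriv k (LSeries ↗(residueClass a)) s := by
  rw [LSeries_iteratedDeriv k
    ((abscissaOfAbsConv_residueClass_le_one a).trans_lt (by exact_mod_cast hs)), ← mul_assoc,
    ← mul_pow, neg_one_mul, neg_neg, one_pow, one_mul, LSeries, residueClassMoment, ofReal_tsum]
  exact tsum_congr fun n => (term_logMul_residueClass a k s n).symm

variable [NeZero m] {a : ZMod m}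

lemma logDeriv_LFunction_one {s : ℂ} (hs : 1 < s.re) :
    logDeriv (1 : DirichletCharacter ℂ m).LFunction s =
      logDeriv (entireLFunction (1 : DirichletCharacter ℂ m)) s - (s - 1)⁻¹ := by
  have hs₁ : s ≠ 1 := by
    rintro rfl
    exact hs.ne' one_re
  have heq : entireLFunction (1 : DirichletCharacter ℂ m) =ᶠ[𝓝 s]
      fun z => (z - 1) * (1 : DirichletCharacter ℂ m).LFunction z := by
    filter_upwards [isOpen_ne.mem_nhds hs₁] with z hz using entireLFunction_one_apply hz
  rw [logDeriv_apply (entireLFunction _), heq.deriv_eq, heq.eq_of_nhds, ← logDeriv_apply,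
    logDeriv_mul (f := fun z => z - 1) s (sub_ne_zero_of_ne hs₁)
      (LFunction_ne_zero_of_one_le_re 1 (.inr hs₁) hs.le) (by fun_prop)
      (differentiableAt_LFunction _ _ (.inl hs₁)), logDeriv_apply (fun z => z - 1),
    deriv_sub_const, deriv_id'', one_div, add_sub_cancel_left]

lemma LSeries_residueClass_eq_sub_sum (ha : IsUnit a) {s : ℂ} (hs : 1 < s.re) :
    LSeries ↗(residueClass a) s = (m.totient : ℂ)⁻¹ * ((s - 1)⁻¹ -
      ∑ χ : DirichletCharacter ℂ m, χ a⁻¹ * logDeriv (entireLFunction χ) s) := by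
  classical
  have ha' : IsUnit a⁻¹ := isUnit_of_dvd_one ⟨a, (ZMod.inv_mul_of_unit a ha).symm⟩
  have hterm (χ : DirichletCharacter ℂ m) : χ a⁻¹ * (deriv χ.LFunction s / χ.LFunction s) =
      χ a⁻¹ * logDeriv (entireLFunction χ) s - if χ = 1 then (s - 1)⁻¹ else 0 := by
    rcases eq_or_ne χ 1 with rfl | hχ
    · rw [← logDeriv_apply, logDeriv_LFunction_one hs, MulChar.one_apply ha', if_pos rfl]
      ring
    · rw [← logDeriv_apply, entireLFunction_of_ne_one hχ, if_neg hχ, sub_zero]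
  rw [LSeries_residueClass_eq ha hs, Finset.sum_congr rfl fun χ _ => hterm χ,
    Finset.sum_sub_distrib, Finset.sum_ite_eq' Finset.univ, if_pos (Finset.mem_univ _)]
  ring

lemma iteratedDeriv_inv_sub_one (k : ℕ) (s : ℂ) :
    iteratedDeriv k (fun z : ℂ => (z - 1)⁻¹) s = (-1) ^ k * (k ! / (s - 1) ^ (k + 1)) := by
  have h := congrFun (iter_deriv_inv_linear_sub k (1 : ℂ) 1) s
  simp only [one_mul, one_pow, mul_one] at h
  rw [iteratedDeriv_eq_iterate, h, show (-1 - k : ℤ) = -((k + 1 : ℕ) : ℤ) by push_cast; ring,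
    zpow_neg, zpow_natCast, mul_assoc, div_eq_mul_inv]

lemma iteratedDeriv_LSeries_residueClass (ha : IsUnit a) (k : ℕ) {s : ℂ} (hs : 1 < s.re) :
    iteratedDeriv k (LSeries ↗(residueClass a)) s =
      (m.totient : ℂ)⁻¹ * ((-1) ^ k * (k ! / (s - 1) ^ (k + 1)) -
        ∑ χ : DirichletCharacter ℂ m,
          χ a⁻¹ * iteratedDeriv k (logDeriv (entireLFunction χ)) s) := by
  have hlog (χ : DirichletCharacter ℂ m) : ContDiffAt ℂ k (logDeriv (entireLFunction χ)) s := by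
    have hanalytic : AnalyticAt ℂ (entireLFunction χ) s :=
      (differentiable_entireLFunction χ).analyticAt s
    exact (hanalytic.deriv.div hanalytic
      (entireLFunction_ne_zero_of_one_le_re χ hs.le)).contDiffAt
  have hpole : ContDiffAt ℂ k (fun z : ℂ => (z - 1)⁻¹) s := by
    refine (contDiffAt_id.sub contDiffAt_const).inv (sub_ne_zero_of_ne ?_)
    rintro rfl
    exact hs.ne' one_re
  have heq : LSeries ↗(residueClass a) =ᶠ[𝓝 s] fun z => (m.totient : ℂ)⁻¹ * ((z - 1)⁻¹ -
      ∑ χ : DirichletCharacter ℂ m, χ a⁻¹ * logDeriv (entireLFunction χ) z) := by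
    filter_upwards [(isOpen_lt continuous_const continuous_re).mem_nhds hs] with z hz
    exact LSeries_residueClass_eq_sub_sum ha hz
  rw [heq.iteratedDeriv_eq, iteratedDeriv_const_mul_field,
    iteratedDeriv_fun_sub hpole (ContDiffAt.sum fun χ _ => contDiffAt_const.mul (hlog χ)),
    iteratedDeriv_inv_sub_one,
    iteratedDeriv_fun_sum fun χ _ => contDiffAt_const.mul (hlog χ)]
  simp only [iteratedDeriv_const_mul_field]

lemma le_residueClassMoment (ha : IsUnit a) (k : ℕ) {s B : ℝ} (hs : 1 < s)
    (hB : ∀ χ : DirichletCharacter ℂ m,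
      ‖iteratedDeriv k (logDeriv (entireLFunction χ)) s‖ ≤ B) :
    (m.totient : ℝ)⁻¹ * (k ! / (s - 1) ^ (k + 1)) - B ≤ residueClassMoment a k s := by
  have hφ : (0 : ℝ) < m.totient := by exact_mod_cast Nat.totient_pos.2 (NeZero.pos m)
  set E := ∑ χ : DirichletCharacter ℂ m,
    χ a⁻¹ * iteratedDeriv k (logDeriv (entireLFunction χ)) s
  have hE : ‖E‖ ≤ m.totient * B :=
    calc ‖E‖ ≤ ∑ _χ : DirichletCharacter ℂ m, B := norm_sum_le_of_le _ fun χ _ => by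
          rw [norm_mul]
          exact (mul_le_of_le_one_left (norm_nonneg _) (χ.norm_le_one _)).trans (hB χ)
      _ = m.totient * B := by
          rw [Finset.sum_const, nsmul_eq_mul, Finset.card_univ, ← Nat.card_eq_fintype_card,
            DirichletCharacter.card_eq_totient_of_hasEnoughRootsOfUnity]
  have hmoment := ofReal_residueClassMoment a k hs
  rw [iteratedDeriv_LSeries_residueClass ha k (by exact_mod_cast hs)] at hmoment
  have hdiff : (((m.totient : ℝ)⁻¹ * (k ! / (s - 1) ^ (k + 1)) - residueClassMoment a k s : ℝ) : ℂ)
      = (-1) ^ k * ((m.totient : ℂ)⁻¹ * E) := by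
    have hsq : ((-1 : ℂ) ^ k) * (-1) ^ k = 1 := by rw [← mul_pow]; simp
    push_cast
    rw [hmoment]
    linear_combination -((m.totient : ℂ)⁻¹ * (k ! / (s - 1) ^ (k + 1))) * hsq
  have hnorm := congrArg norm hdiff
  rw [norm_real, norm_mul, norm_mul, norm_pow, norm_neg, norm_one, one_pow, one_mul, norm_inv,
    Complex.norm_natCast] at hnorm
  have herror : (m.totient : ℝ)⁻¹ * ‖E‖ ≤ B := (inv_mul_le_iff₀ hφ).2 hE
  linarith [(Real.le_norm_self _).trans (hnorm.trans_le herror)]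

end ResidueClassMoment

/-! ### Primes in residue classes -/

section NoPrime

open ArithmeticFunction.vonMangoldt
open ArithmeticFunction (vonMangoldt_nonneg)
open scoped Nat

lemma summable_vonMangoldt_rpow_neg_two :
    Summable fun n : ℕ => Λ n * (n : ℝ) ^ (-2 : ℝ) := by
  refine (summable_residueClass_log_pow (0 : ZMod 1) 0 one_lt_two).congr fun n => ?_
  have hmem : n ∈ {n : ℕ | (n : ZMod 1) = 0} := Subsingleton.elim (α := ZMod 1) _ _
  rw [residueClass, Set.indicator_of_mem hmem, pow_zero, mul_one]

variable {D : ℝ}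

/-- Keep `(log n)ᵏ / k!` below an exponential in `log n` whose rate is `D` tilted by `1 + τ`. -/
lemma log_pow_mul_rpow_le {τ : ℝ} (hD : 0 < D) (hτ : -1 < τ) (k : ℕ) {n : ℕ} (hn : n ≠ 0) :
    D ^ k / k ! * (Real.log n ^ k * (n : ℝ) ^ (-(D + 1))) ≤
      (n : ℝ) ^ (-2 : ℝ) * ((1 + τ)⁻¹ ^ k * (n : ℝ) ^ (1 + D * τ)) := by
  have hn₀ : (0 : ℝ) < n := by exact_mod_cast hn.bot_lt
  have hτ' : 0 < 1 + τ := by linarith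
  have hexp := Real.pow_div_factorial_le_exp (Real.log n * (D * (1 + τ))) (by positivity) k
  rw [← Real.rpow_def_of_pos hn₀] at hexp
  calc D ^ k / k ! * (Real.log n ^ k * (n : ℝ) ^ (-(D + 1)))
      = (1 + τ)⁻¹ ^ k * ((Real.log n * (D * (1 + τ))) ^ k / k ! * (n : ℝ) ^ (-(D + 1))) := by
        rw [inv_pow, mul_pow, mul_pow]
        field_simp
    _ ≤ (1 + τ)⁻¹ ^ k * ((n : ℝ) ^ (D * (1 + τ)) * (n : ℝ) ^ (-(D + 1))) := by gcongr
    _ = (1 + τ)⁻¹ ^ k * ((n : ℝ) ^ (-2 : ℝ) * (n : ℝ) ^ (1 + D * τ)) := by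
        rw [← Real.rpow_add hn₀, ← Real.rpow_add hn₀]
        ring_nf
    _ = _ := mul_left_comm _ _ _

variable {m : ℕ} {a : ZMod m}

variable (a) in
lemma residueClass_term_le {τ : ℝ} (hD : 0 < D) (hτ : -1 < τ) (k n : ℕ) :
    D ^ k / k ! * (residueClass a n * Real.log n ^ k * (n : ℝ) ^ (-(D + 1))) ≤
      Λ n * (n : ℝ) ^ (-2 : ℝ) * ((1 + τ)⁻¹ ^ k * (n : ℝ) ^ (1 + D * τ)) := by
  rcases eq_or_ne n 0 with rfl | hn
  · simp
  calc _ = residueClass a n * (D ^ k / k ! * (Real.log n ^ k * (n : ℝ) ^ (-(D + 1)))) := by ring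
    _ ≤ Λ n * ((n : ℝ) ^ (-2 : ℝ) * ((1 + τ)⁻¹ ^ k * (n : ℝ) ^ (1 + D * τ))) :=
        mul_le_mul (residueClass_le a n) (log_pow_mul_rpow_le hD hτ k hn) (by positivity)
          vonMangoldt_nonneg
    _ = _ := (mul_assoc _ _ _).symm

variable {X Y t u : ℝ}

lemma residueClass_term_le_of_no_prime (hY : 0 < Y) (hX : 0 < X) (hu : u < 1) (ht : 0 < t)
    (hD : 0 < D) (hDu : 1 ≤ D * u)
    (hno : ∀ p : ℕ, p.Prime → (p : ZMod m) = a → Y ≤ p → ¬p ≤ X) (k n : ℕ) :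
    D ^ k / k ! * (residueClass a n * Real.log n ^ k * (n : ℝ) ^ (-(D + 1))) ≤
      Λ n * (n : ℝ) ^ (-2 : ℝ) *
          ((1 + t)⁻¹ ^ k * Y ^ (1 + D * t) + (1 - u)⁻¹ ^ k * X ^ (1 - D * u)) +
        if n ∈ {n ∈ Finset.Ioc 0 ⌊X⌋₊ | ¬n.Prime} then Λ n / Y else 0 := by
  have : 0 < 1 - u := by linarith
  have hdiv : 0 ≤ if n ∈ {n ∈ Finset.Ioc 0 ⌊X⌋₊ | ¬n.Prime} then Λ n / Y else 0 := by
    split_ifs <;> positivity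
  rcases lt_or_ge (n : ℝ) Y with hnY | hYn
  · refine (residueClass_term_le a hD (by linarith : -1 < t) k n).trans
      (le_add_of_le_of_nonneg ?_ hdiv)
    gcongr
    exact le_add_of_le_of_nonneg (by gcongr) (by positivity)
  have hn : (0 : ℝ) < n := hY.trans_le hYn
  rcases lt_or_ge X n with hXn | hnX
  · refine (residueClass_term_le a hD (by linarith : -1 < -u) k n).trans
      (le_add_of_le_of_nonneg ?_ hdiv)
    rw [mul_neg, ← sub_eq_add_neg, ← sub_eq_add_neg]
    gcongr
    refine le_add_of_nonneg_of_le (by positivity) ?_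
    gcongr _ * ?_
    exact Real.rpow_le_rpow_of_nonpos hX hXn.le (by linarith)
  by_cases hna : (n : ZMod m) = a
  · have hmem : n ∈ {n ∈ Finset.Ioc 0 ⌊X⌋₊ | ¬n.Prime} :=
      Finset.mem_filter.2 ⟨Finset.mem_Ioc.2 ⟨by exact_mod_cast hn, Nat.le_floor hnX⟩,
        fun hp => hno n hp hna hYn hnX⟩
    rw [if_pos hmem]
    refine (residueClass_term_le a hD neg_one_lt_zero k n).trans
      (le_add_of_nonneg_of_le (by positivity) ?_)
    calc Λ n * (n : ℝ) ^ (-2 : ℝ) * ((1 + 0)⁻¹ ^ k * (n : ℝ) ^ (1 + D * 0)) = Λ n / n := by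
          rw [add_zero, inv_one, one_pow, one_mul, mul_assoc, ← Real.rpow_add hn, div_eq_mul_inv,
            ← Real.rpow_neg_one]
          norm_num
      _ ≤ Λ n / Y := by gcongr
  · have hmem : n ∉ {n : ℕ | (n : ZMod m) = a} := hna
    rw [residueClass, Set.indicator_of_notMem hmem, zero_mul, zero_mul, mul_zero]
    positivity

lemma residueClassMoment_le_of_no_prime (hY : 0 < Y) (hX : 1 ≤ X) (hu : u < 1) (ht : 0 < t)
    (hD : 0 < D) (hDu : 1 ≤ D * u)
    (hno : ∀ p : ℕ, p.Prime → (p : ZMod m) = a → Y ≤ p → ¬p ≤ X) (k : ℕ) :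
    D ^ k / k ! * residueClassMoment a k (D + 1) ≤
      (∑' n : ℕ, Λ n * (n : ℝ) ^ (-2 : ℝ)) *
          ((1 + t)⁻¹ ^ k * Y ^ (1 + D * t) + (1 - u)⁻¹ ^ k * X ^ (1 - D * u)) +
        2 * √X * Real.log X / Y := by
  set F : Finset ℕ := {n ∈ Finset.Ioc 0 ⌊X⌋₊ | ¬n.Prime}
  have hF : ∑ n ∈ F, Λ n / Y ≤ 2 * √X * Real.log X / Y := by
    rw [← Finset.sum_div, ← Chebyshev.psi_sub_theta_eq_sum_not_prime]
    gcongr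
    exact Chebyshev.psi_sub_theta_le hX
  have hmiddle : HasSum (fun n => if n ∈ F then Λ n / Y else 0) (∑ n ∈ F, Λ n / Y) := by
    rw [Finset.sum_congr rfl fun n hn => (if_pos hn).symm]
    exact hasSum_sum_of_ne_finset_zero fun n hn => if_neg hn
  have htails := summable_vonMangoldt_rpow_neg_two.mul_right
    ((1 + t)⁻¹ ^ k * Y ^ (1 + D * t) + (1 - u)⁻¹ ^ k * X ^ (1 - D * u))
  have hsummable := (summable_residueClass_log_pow a k (s := D + 1) (by linarith)).mul_left
    (D ^ k / k !)
  rw [residueClassMoment, ← tsum_mul_left, ← tsum_mul_right]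
  refine (hsummable.tsum_le_tsum (residueClass_term_le_of_no_prime hY (one_pos.trans_le hX) hu ht
    hD hDu hno k) (htails.add hmiddle.summable)).trans ?_
  rw [htails.tsum_add hmiddle.summable, hmiddle.tsum_eq]
  gcongr

end NoPrime

section PrimeWindow

open ArithmeticFunction.vonMangoldt
open ArithmeticFunction (vonMangoldt_nonneg)
open Filter
open scoped Nat

lemma inv_one_add_pow_mul_exp_rpow_le {η D l : ℝ} {k : ℕ} (hη : 0 < η) (hD : D * η ^ 2 = 32)
    (hl : 0 ≤ l) (hk : D * l ≤ k) :
    (1 + η)⁻¹ ^ k * Real.exp (l * (1 - η)) ^ (1 + D * η) ≤ Real.exp (-l) := by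
  have hpow : (1 + η)⁻¹ ^ k = Real.exp (-(k * Real.log (1 + η))) := by
    rw [Real.exp_neg, Real.exp_nat_mul, Real.exp_log (by linarith), inv_pow]
  have hlog : D * l * (2 * η / (η + 2)) ≤ k * Real.log (1 + η) := by
    gcongr
    exact Real.le_log_one_add_of_nonneg hη.le
  have hfrac : 2 + (D * η - η - D * η ^ 2) ≤ D * (2 * η / (η + 2)) := by
    rw [← mul_div_assoc, le_div_iff₀ (by linarith)]
    nlinarith
  rw [hpow, ← Real.exp_mul, ← Real.exp_add, Real.exp_le_exp]
  linarith [mul_le_mul_of_nonneg_left hfrac hl, mul_nonneg hl hη.le, congrArg (l * ·) hD,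
    mul_assoc D l (2 * η / (η + 2)), mul_left_comm l D (2 * η / (η + 2))]

lemma inv_one_sub_pow_mul_exp_rpow_le {η D l : ℝ} {k : ℕ} (hη : 0 < η) (hη' : η ≤ 1 / 8)
    (hD : D * η ^ 2 = 32) (hl : 0 ≤ l) (hk : k ≤ D * l + 1) :
    (1 - η / 4)⁻¹ ^ k * Real.exp (l * (1 + η)) ^ (1 - D * (η / 4)) ≤ 3 * Real.exp (-l) := by
  have hpos : 0 < 1 - η / 4 := by linarith
  have hpow : (1 - η / 4)⁻¹ ^ k = Real.exp (k * -Real.log (1 - η / 4)) := by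
    rw [mul_neg, Real.exp_neg, Real.exp_nat_mul, Real.exp_log hpos, inv_pow]
  have hlog : -Real.log (1 - η / 4) ≤ η / 4 * (1 + η / 2) := by
    have hinv : (1 - η / 4)⁻¹ ≤ 1 + η / 4 * (1 + η / 2) := by
      rw [inv_le_iff_one_le_mul₀ hpos]
      nlinarith [mul_pos hη hη]
    linarith [Real.one_sub_inv_le_log_of_pos hpos]
  have hlog₀ : 0 ≤ -Real.log (1 - η / 4) :=
    neg_nonneg.2 (Real.log_nonpos hpos.le (by linarith))
  have hexponent : k * -Real.log (1 - η / 4) + l * (1 + η) * (1 - D * (η / 4)) ≤ 1 + -l :=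
    calc
      _ ≤ (D * l + 1) * (η / 4 * (1 + η / 2)) + l * (1 + η) * (1 - D * (η / 4)) := by
        gcongr
        exact k.cast_nonneg.trans hk
      _ = η / 4 * (1 + η / 2) + l * (1 + η) - D * η ^ 2 * l / 8 := by ring
      _ ≤ 1 + -l := by
        rw [hD]
        nlinarith
  rw [hpow, ← Real.exp_mul, ← Real.exp_add]
  calc _ ≤ Real.exp (1 + -l) := Real.exp_le_exp.2 hexponent
    _ ≤ 3 * Real.exp (-l) := by
        rw [Real.exp_add]
        gcongr
        exact Real.exp_one_lt_three.le

lemma two_mul_sqrt_exp_mul_log_div_le {η l : ℝ} (hη : 0 < η) (hη' : η ≤ 1 / 8) (hl : 0 ≤ l) :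
    2 * √(Real.exp (l * (1 + η))) * Real.log (Real.exp (l * (1 + η))) / Real.exp (l * (1 - η)) ≤
      4 * l * Real.exp (l * (2 * η - 1 / 2)) := by
  rw [Real.log_exp, ← Real.exp_half, div_eq_mul_inv, ← Real.exp_neg]
  calc 2 * Real.exp (l * (1 + η) / 2) * (l * (1 + η)) * Real.exp (-(l * (1 - η)))
      = 2 * (1 + η) * l * Real.exp (l * (3 / 2 * η - 1 / 2)) := by
        rw [show l * (3 / 2 * η - 1 / 2) = l * (1 + η) / 2 + -(l * (1 - η)) by ring, Real.exp_add]
        ring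
    _ ≤ _ := by
        gcongr <;> linarith

lemma div_pow_le_exp {η D l : ℝ} {k : ℕ} (hη : 0 < η) (hη' : η ≤ 1 / 8) (hD : 0 < D)
    (hDη : 1 ≤ D * (4 * η)) (hl : 0 ≤ l) (hk : D * l ≤ k) :
    (D / (D + 1 / 2 - η / 2)) ^ k ≤ Real.exp (l * (2 * η - 1 / 2)) := by
  have hr : 0 < D + 1 / 2 - η / 2 := by linarith
  have hratio : 0 < D / (D + 1 / 2 - η / 2) := by positivity
  have hgap : 0 ≤ (1 / 2 - η / 2) / (D + 1 / 2 - η / 2) := div_nonneg (by linarith) hr.le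
  have hlog : Real.log (D / (D + 1 / 2 - η / 2)) ≤
      -((1 / 2 - η / 2) / (D + 1 / 2 - η / 2)) := by
    refine (Real.log_le_sub_one_of_pos hratio).trans_eq ?_
    rw [div_sub_one hr.ne', ← neg_div]
    ring
  have hfrac : 1 / 2 - 2 * η ≤ D * ((1 / 2 - η / 2) / (D + 1 / 2 - η / 2)) := by
    rw [← mul_div_assoc, le_div_iff₀ hr]
    nlinarith
  rw [← Real.exp_log hratio, ← Real.exp_nat_mul, Real.exp_le_exp]
  calc k * Real.log (D / (D + 1 / 2 - η / 2))
      ≤ k * -((1 / 2 - η / 2) / (D + 1 / 2 - η / 2)) := by gcongr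
    _ = -(k * ((1 / 2 - η / 2) / (D + 1 / 2 - η / 2))) := mul_neg _ _
    _ ≤ -(D * l * ((1 / 2 - η / 2) / (D + 1 / 2 - η / 2))) := by gcongr
    _ = l * -(D * ((1 / 2 - η / 2) / (D + 1 / 2 - η / 2))) := by ring
    _ ≤ l * (2 * η - 1 / 2) := by
        gcongr
        linarith

/-- Both tails of the moment are negligible because `k ≈ D l` concentrates the weight
`(log n)ᵏ n⁻ᴰ` near `log n = l`; in between only proper prime powers survive. -/
lemma residueClassMoment_le_exp_of_no_prime {m : ℕ} {a : ZMod m} {η D l : ℝ} {k : ℕ}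
    (hη : 0 < η) (hη' : η ≤ 1 / 8) (hD : D * η ^ 2 = 32) (hl : 0 ≤ l) (hk : D * l ≤ k)
    (hk' : k ≤ D * l + 1)
    (hno : ∀ p : ℕ, p.Prime → (p : ZMod m) = a → Real.exp (l * (1 - η)) ≤ p →
      ¬p ≤ Real.exp (l * (1 + η))) :
    D ^ k / k ! * residueClassMoment a k (D + 1) ≤
      (4 * (∑' n : ℕ, Λ n * (n : ℝ) ^ (-2 : ℝ)) + 4 * l) * Real.exp (l * (2 * η - 1 / 2)) := by
  have hD₀ : 0 < D := pos_of_mul_pos_left (hD ▸ by norm_num) (sq_nonneg η)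
  have hDη : 1 ≤ D * (η / 4) := by nlinarith
  have hX : 1 ≤ Real.exp (l * (1 + η)) := Real.one_le_exp (by positivity)
  have hdecay : Real.exp (-l) ≤ Real.exp (l * (2 * η - 1 / 2)) := by
    rw [Real.exp_le_exp]
    nlinarith
  have htails : (1 + η)⁻¹ ^ k * Real.exp (l * (1 - η)) ^ (1 + D * η) +
      (1 - η / 4)⁻¹ ^ k * Real.exp (l * (1 + η)) ^ (1 - D * (η / 4)) ≤
      4 * Real.exp (l * (2 * η - 1 / 2)) := by
    linarith [inv_one_add_pow_mul_exp_rpow_le hη hD hl hk,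
      inv_one_sub_pow_mul_exp_rpow_le hη hη' hD hl hk']
  have hΛ : 0 ≤ ∑' n : ℕ, Λ n * (n : ℝ) ^ (-2 : ℝ) :=
    tsum_nonneg fun n => mul_nonneg vonMangoldt_nonneg (by positivity)
  linarith [residueClassMoment_le_of_no_prime (Real.exp_pos _) hX (by linarith) hη hD₀ hDη hno k,
    mul_le_mul_of_nonneg_left htails hΛ, two_mul_sqrt_exp_mul_log_div_le hη hη' hl]

lemma exists_totient_inv_div_sub_le_residueClassMoment (erh : ExtendedRiemannHypothesis)
    {η D : ℝ} (hη : 0 < η) (hηD : η ≤ D) (hD : 1 ≤ D) :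
    ∃ C : ℝ, 1 < C ∧ ∀ (m : ℕ) [NeZero m] (a : ZMod m), IsUnit a → ∀ k : ℕ,
      (m.totient : ℝ)⁻¹ / D -
          (k + 1) * (4 / η * Real.log (C * m)) * (D / (D + 1 / 2 - η / 2)) ^ k ≤
        D ^ k / k ! * residueClassMoment a k (D + 1) := by
  obtain ⟨C, hC, hbound⟩ :=
    exists_norm_iteratedDeriv_logDeriv_entireLFunction_le erh (c := D + 1) (by linarith)
  refine ⟨C, hC, fun m _ a ha k => ?_⟩
  have hr : 0 < D + 1 / 2 - η / 2 := by linarith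
  have hmoment := le_residueClassMoment ha k (by linarith) fun χ =>
    hbound m χ (D + 1 / 2 - η / 2) k hr (by linarith)
  rw [add_sub_cancel_right, show D + 1 - 1 / 2 - (D + 1 / 2 - η / 2) = η / 2 by ring] at hmoment
  refine le_of_eq_of_le ?_ (mul_le_mul_of_nonneg_left hmoment (by positivity))
  have := hr.ne'
  rw [Nat.factorial_succ, div_pow]
  push_cast
  field_simp
  ring

lemma exists_exp_div_le_residueClassMoment (erh : ExtendedRiemannHypothesis) {η D : ℝ}
    (hη : 0 < η) (hη' : η ≤ 1 / 8) (hD : 1 ≤ D) (hDη : 1 ≤ D * (4 * η)) :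
    ∃ C : ℝ, ∀ (m : ℕ) [NeZero m] (a : ZMod m), IsUnit a → ∀ (l : ℝ) (k : ℕ), 0 ≤ l →
      D * l ≤ k → k ≤ D * l + 1 → m ≤ Real.exp (l * (1 / 2 - 4 * η)) →
      Real.exp (l * (4 * η - 1 / 2)) / D ≤ D ^ k / k ! * residueClassMoment a k (D + 1) +
        (D * l + 2) * (4 / η * (Real.log C + l)) * Real.exp (l * (2 * η - 1 / 2)) := by
  obtain ⟨C, hC, hmoment⟩ :=
    exists_totient_inv_div_sub_le_residueClassMoment erh hη (by linarith) hD
  refine ⟨C, fun m _ a ha l k hl hk hk' hm => ?_⟩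
  have hm₁ : (1 : ℝ) ≤ m := mod_cast NeZero.one_le
  have hlog : Real.log (C * m) ≤ Real.log C + l := by
    rw [Real.log_mul (by linarith) (by linarith)]
    have := (Real.log_le_iff_le_exp (by linarith)).2 hm
    nlinarith
  have hlog₀ : 0 ≤ Real.log (C * m) := Real.log_nonneg (by nlinarith)
  have htotient : Real.exp (l * (4 * η - 1 / 2)) ≤ (m.totient : ℝ)⁻¹ := by
    rw [show l * (4 * η - 1 / 2) = -(l * (1 / 2 - 4 * η)) by ring, Real.exp_neg]
    have : (0 : ℝ) < m.totient := mod_cast Nat.totient_pos.2 (NeZero.pos m)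
    gcongr
    exact le_trans (mod_cast Nat.totient_le m) hm
  have herror : (k + 1) * (4 / η * Real.log (C * m)) * (D / (D + 1 / 2 - η / 2)) ^ k ≤
      (D * l + 2) * (4 / η * (Real.log C + l)) * Real.exp (l * (2 * η - 1 / 2)) := by
    have : (k : ℝ) + 1 ≤ D * l + 2 := by linarith
    have := div_pow_le_exp hη hη' (by linarith) hDη hl hk
    have : 0 ≤ Real.log C + l := hlog₀.trans hlog
    have : 0 < D + 1 / 2 - η / 2 := by linarith
    gcongr
  have : Real.exp (l * (4 * η - 1 / 2)) / D ≤ (m.totient : ℝ)⁻¹ / D := by gcongr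
  linarith [hmoment m a ha k]

lemma exists_exp_le_quadratic_of_no_prime (erh : ExtendedRiemannHypothesis) {η : ℝ}
    (hη : 0 < η) (hη' : η ≤ 1 / 8) :
    ∃ a₀ a₁ a₂ : ℝ, ∀ (m : ℕ) [NeZero m] (a : ZMod m), IsUnit a → ∀ l : ℝ, 0 ≤ l →
      m ≤ Real.exp (l * (1 / 2 - 4 * η)) →
      (∀ p : ℕ, p.Prime → (p : ZMod m) = a → Real.exp (l * (1 - η)) ≤ p →
        ¬p ≤ Real.exp (l * (1 + η))) →
      Real.exp (2 * η * l) ≤ a₀ + a₁ * l + a₂ * l ^ 2 := by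
  obtain ⟨D, hD⟩ : ∃ D, D * η ^ 2 = 32 := ⟨32 / η ^ 2, by field_simp⟩
  have hD₁ : 1 ≤ D := by nlinarith
  obtain ⟨C, hlower⟩ := exists_exp_div_le_residueClassMoment erh hη hη' hD₁ (by nlinarith)
  set K := 4 * ∑' n : ℕ, Λ n * (n : ℝ) ^ (-2 : ℝ)
  refine ⟨D * (8 / η * Real.log C + K), D * (D * (4 / η) * Real.log C + 8 / η + 4),
    D * (D * (4 / η)), fun m _ a ha l hl hm hno => ?_⟩
  have hk := Nat.le_ceil (D * l)
  have hk' := (Nat.ceil_lt_add_one (a := D * l) (by positivity)).le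
  have hlow := hlower m a ha l _ hl hk hk' hm
  have hupp := residueClassMoment_le_exp_of_no_prime hη hη' hD hl hk hk' hno
  have hsplit : Real.exp (l * (4 * η - 1 / 2)) =
      Real.exp (2 * η * l) * Real.exp (l * (2 * η - 1 / 2)) := by
    rw [← Real.exp_add]
    ring_nf
  have hle : Real.exp (2 * η * l) / D ≤
      (D * l + 2) * (4 / η * (Real.log C + l)) + (K + 4 * l) := by
    refine le_of_mul_le_mul_right ?_ (Real.exp_pos (l * (2 * η - 1 / 2)))
    rw [hsplit] at hlow
    linarith [div_mul_eq_mul_div (Real.exp (2 * η * l)) D (Real.exp (l * (2 * η - 1 / 2)))]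
  rw [div_le_iff₀ (by linarith)] at hle
  refine hle.trans_eq ?_
  ring

lemma eventually_quadratic_lt_exp (a₀ a₁ a₂ : ℝ) {b : ℝ} (hb : 0 < b) :
    ∀ᶠ l in atTop, a₀ + a₁ * l + a₂ * l ^ 2 < Real.exp (b * l) := by
  have hlittle : (fun l : ℝ => a₀ * l ^ 0 + a₁ * l ^ 1 + a₂ * l ^ 2) =o[atTop]
      fun l => Real.exp (b * l) :=
    (((isLittleO_pow_exp_pos_mul_atTop 0 hb).const_mul_left a₀).add
      ((isLittleO_pow_exp_pos_mul_atTop 1 hb).const_mul_left a₁)).add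
      ((isLittleO_pow_exp_pos_mul_atTop 2 hb).const_mul_left a₂)
  filter_upwards [hlittle.def one_half_pos] with l hl
  rw [pow_zero, mul_one, pow_one, Real.norm_of_nonneg (Real.exp_pos _).le] at hl
  linarith [Real.le_norm_self (a₀ + a₁ * l + a₂ * l ^ 2), Real.exp_pos (b * l)]

theorem eventually_exists_prime_in_window (erh : ExtendedRiemannHypothesis) {e : ℝ} (he : 0 < e)
    (he' : e ≤ 1 / 2) :
    ∀ᶠ x : ℝ in atTop, ∀ (m : ℕ) [NeZero m], (m : ℝ) ≤ x ^ (1 / 2 - e) →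
      ∀ a : ZMod m, IsUnit a →
        ∃ p : ℕ, p.Prime ∧ (p : ZMod m) = a ∧ x ^ (1 - e) ≤ p ∧ p ≤ x ^ (1 + e) := by
  obtain ⟨η, rfl⟩ : ∃ η, e = 4 * η := ⟨e / 4, by ring⟩
  have hη : 0 < η := by linarith
  obtain ⟨a₀, a₁, a₂, hquadratic⟩ :=
    exists_exp_le_quadratic_of_no_prime erh hη (by linarith)
  have hlt := eventually_quadratic_lt_exp a₀ a₁ a₂ (b := 2 * η) (by positivity)
  filter_upwards [eventually_ge_atTop 1, Real.tendsto_log_atTop.eventually hlt]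
    with x hx hlarge m _ hm a ha
  have hl : 0 ≤ Real.log x := Real.log_nonneg hx
  simp only [Real.rpow_def_of_pos (zero_lt_one.trans_le hx)] at hm ⊢
  by_contra! hno
  refine hlarge.not_ge (hquadratic m a ha _ hl hm fun p hp hpa hYp hpX => ?_)
  have hY : Real.exp (Real.log x * (1 - 4 * η)) ≤ Real.exp (Real.log x * (1 - η)) := by
    gcongr
    linarith
  have hX : Real.exp (Real.log x * (1 + η)) ≤ Real.exp (Real.log x * (1 + 4 * η)) := by
    gcongr
    linarith
  exact (hno p hp hpa (hY.trans hYp)).not_ge (hpX.trans hX)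

end PrimeWindow

section Partition

open Filter

lemma exists_prime_not_dvd {j n z : ℕ} (hn : n ≠ 0) (hz : z ≠ 0) (h : n < z ^ j) :
    ∃ p, p.Prime ∧ z < p ∧ p ≤ 2 ^ j * z ∧ ¬p ∣ n := by
  induction j generalizing n z with
  | zero => exact absurd (Nat.lt_one_iff.1 h) hn
  | succ j ih =>
    obtain ⟨ℓ, hℓ, hzℓ, hℓz⟩ := Nat.exists_prime_lt_and_le_two_mul z hz
    by_cases hdvd : ℓ ∣ n
    · obtain ⟨n', rfl⟩ := hdvd
      have hlt : n' < ℓ ^ j := by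
        refine lt_of_mul_lt_mul_left (?_ : ℓ * n' < ℓ * ℓ ^ j) ℓ.zero_le
        rw [← pow_succ']
        exact h.trans_le (Nat.pow_le_pow_left hzℓ.le _)
      obtain ⟨p, hp, hℓp, hpℓ, hpn'⟩ := ih (right_ne_zero_of_mul hn) hℓ.ne_zero hlt
      refine ⟨p, hp, hzℓ.trans hℓp, ?_, fun hpn => ?_⟩
      · calc p ≤ 2 ^ j * ℓ := hpℓ
          _ ≤ 2 ^ j * (2 * z) := Nat.mul_le_mul_left _ hℓz
          _ = 2 ^ (j + 1) * z := by ring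
      · rcases hp.dvd_mul.1 hpn with hpℓ' | hpn''
        · exact hℓp.ne' ((Nat.prime_dvd_prime_iff_eq hp hℓ).1 hpℓ')
        · exact hpn' hpn''
    · have hpow := Nat.le_self_pow j.succ_ne_zero 2
      exact ⟨ℓ, hℓ, hzℓ, hℓz.trans (Nat.mul_le_mul_right z hpow), hdvd⟩

lemma exists_isUnit_forall_natCast_eq_modEq {n p q : ℕ} (hp : p.Prime) (hq : q.Prime)
    (hpq : p ≠ q) (hn : ¬p ∣ n) :
    ∃ a : ZMod (p * q), IsUnit a ∧
      ∀ r : ℕ, (r : ZMod (p * q)) = a → r ≡ n [MOD p] ∧ r ≡ 1 [MOD q] := by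
  obtain ⟨c, hcp, hcq⟩ := Nat.chineseRemainder ((Nat.coprime_primes hp hq).2 hpq) n 1
  have hcp' : c.Coprime p := hcp.gcd_eq.trans (hp.coprime_iff_not_dvd.2 hn).symm
  have hcq' : c.Coprime q := hcq.gcd_eq.trans q.gcd_one_left
  refine ⟨c, (ZMod.isUnit_iff_coprime _ _).2 (hcp'.mul_right hcq'), fun r hr => ?_⟩
  have hrc := (ZMod.natCast_eq_natCast_iff _ _ _).1 hr
  exact ⟨(hrc.of_mul_right q).trans hcp, (hrc.of_mul_left p).trans hcq⟩

lemma eventually_le_natCast_rpow (c : ℝ) {e : ℝ} (he : 0 < e) :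
    ∀ᶠ n : ℕ in atTop, c ≤ (n : ℝ) ^ e :=
  ((tendsto_rpow_atTop he).comp tendsto_natCast_atTop_atTop).eventually_ge_atTop c

lemma eventually_exists_primes_lt_not_dvd {e : ℝ} (he : 0 < e) (he' : e ≤ 1 / 50) :
    ∀ᶠ n : ℕ in atTop, ∃ p q : ℕ, p.Prime ∧ q.Prime ∧ p < q ∧ ¬p ∣ n ∧
      (n : ℝ) ^ (1 / 4 - 2 * e) + 1 ≤ p ∧ q ≤ (n : ℝ) ^ (1 / 4 - e) := by
  filter_upwards [eventually_gt_atTop 1, eventually_le_natCast_rpow 128 he] with n hn hlarge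
  have hn₁ : (1 : ℝ) < n := mod_cast hn
  set y := (n : ℝ) ^ (1 / 4 - 2 * e)
  have hy : 1 ≤ y := Real.one_le_rpow hn₁.le (by linarith)
  have hz : y ≤ ⌈y⌉₊ := Nat.le_ceil y
  have hz' : (⌈y⌉₊ : ℝ) < y + 1 := Nat.ceil_lt_add_one (by linarith)
  have hlt : n < ⌈y⌉₊ ^ 5 := by
    have : (n : ℝ) < ⌈y⌉₊ ^ 5 :=
      calc (n : ℝ) = (n : ℝ) ^ (1 : ℝ) := (Real.rpow_one _).symm
        _ < (n : ℝ) ^ ((1 / 4 - 2 * e) * 5) := Real.rpow_lt_rpow_of_exponent_lt hn₁ (by linarith)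
        _ = y ^ 5 := mod_cast Real.rpow_mul_natCast (by positivity) _ 5
        _ ≤ ⌈y⌉₊ ^ 5 := by gcongr
    exact_mod_cast this
  obtain ⟨p, hp, hzp, hpz, hpn⟩ :=
    exists_prime_not_dvd (by lia) (Nat.ceil_pos.2 (by linarith)).ne' hlt
  obtain ⟨q, hq, hpq, hqp⟩ := Nat.exists_prime_lt_and_le_two_mul p hp.ne_zero
  have hzp' : (⌈y⌉₊ : ℝ) + 1 ≤ p := mod_cast hzp
  have hqz : (q : ℝ) ≤ 64 * ⌈y⌉₊ := mod_cast (by lia : q ≤ 64 * ⌈y⌉₊)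
  refine ⟨p, q, hp, hq, hpq, hpn, by linarith, ?_⟩
  calc (q : ℝ) ≤ 128 * y := by linarith
    _ ≤ (n : ℝ) ^ e * y := by gcongr
    _ = (n : ℝ) ^ (1 / 4 - e) := by
        rw [← Real.rpow_add (by linarith)]
        ring_nf

lemma eventually_exists_prime_modEq (erh : ExtendedRiemannHypothesis) {e : ℝ} (he : 0 < e)
    (he' : e < 1 / 2) :
    ∀ᶠ n : ℕ in atTop, ∀ p q : ℕ, p.Prime → q.Prime → p ≠ q → ¬p ∣ n →
      (p : ℝ) ≤ (n : ℝ) ^ (1 / 4 - e) → (q : ℝ) ≤ (n : ℝ) ^ (1 / 4 - e) →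
      ∃ r : ℕ, r.Prime ∧ r ≡ n [MOD p] ∧ r ≡ 1 [MOD q] ∧
        (n : ℝ) ^ (1 - 3 * e) ≤ r ∧ 2 * r ≤ n := by
  have hwindow := ((tendsto_rpow_atTop (by linarith : 0 < 1 - 2 * e)).comp
    tendsto_natCast_atTop_atTop).eventually (eventually_exists_prime_in_window erh he he'.le)
  filter_upwards [hwindow, eventually_gt_atTop 1, eventually_le_natCast_rpow 2 he]
    with n hwindow hn hlarge p q hp hq hpq hpn hpe hqe
  have hn₁ : (1 : ℝ) < n := mod_cast hn
  have hn₀ : (0 : ℝ) < n := by linarith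
  simp only [Function.comp_apply, ← Real.rpow_mul hn₀.le] at hwindow
  have : NeZero (p * q) := ⟨mul_ne_zero hp.ne_zero hq.ne_zero⟩
  have hm : ((p * q : ℕ) : ℝ) ≤ (n : ℝ) ^ ((1 - 2 * e) * (1 / 2 - e)) :=
    calc ((p * q : ℕ) : ℝ) = p * q := Nat.cast_mul p q
      _ ≤ (n : ℝ) ^ (1 / 4 - e) * (n : ℝ) ^ (1 / 4 - e) := by gcongr
      _ = (n : ℝ) ^ ((1 / 4 - e) + (1 / 4 - e)) := (Real.rpow_add hn₀ _ _).symm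
      _ ≤ (n : ℝ) ^ ((1 - 2 * e) * (1 / 2 - e)) :=
          Real.rpow_le_rpow_of_exponent_le hn₁.le (by nlinarith)
  obtain ⟨a, ha, hmod⟩ := exists_isUnit_forall_natCast_eq_modEq hp hq hpq hpn
  obtain ⟨r, hr, hra, hle, hge⟩ := hwindow (p * q) hm a ha
  refine ⟨r, hr, (hmod r hra).1, (hmod r hra).2, le_trans ?_ hle, ?_⟩
  · exact Real.rpow_le_rpow_of_exponent_le hn₁.le (by nlinarith)
  · have : 2 * (r : ℝ) ≤ n :=
      calc 2 * (r : ℝ) ≤ (n : ℝ) ^ e * (n : ℝ) ^ ((1 - 2 * e) * (1 + e)) := by gcongr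
        _ = (n : ℝ) ^ (e + (1 - 2 * e) * (1 + e)) := (Real.rpow_add hn₀ _ _).symm
        _ ≤ (n : ℝ) ^ (1 : ℝ) := Real.rpow_le_rpow_of_exponent_le hn₁.le (by nlinarith)
        _ = n := Real.rpow_one _
    exact_mod_cast this

lemma lt_of_mul_le_of_rpow_le {n k p r : ℕ} {e : ℝ} (hn : 1 < n) (he : 5 * e ≤ 1 / 4)
    (hkp : k * p ≤ n) (hp : (n : ℝ) ^ (1 / 4 - 2 * e) + 1 ≤ p) (hr : (n : ℝ) ^ (1 - 3 * e) ≤ r) :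
    k < r := by
  have hn₁ : (1 : ℝ) < n := mod_cast hn
  have hr₀ : (0 : ℝ) < r := lt_of_lt_of_le (by positivity) hr
  have : (k * p : ℝ) < r * p :=
    calc (k * p : ℝ) ≤ (n : ℝ) ^ (1 : ℝ) := by rw [Real.rpow_one]; exact_mod_cast hkp
      _ ≤ (n : ℝ) ^ (1 - 3 * e + (1 / 4 - 2 * e)) :=
          Real.rpow_le_rpow_of_exponent_le hn₁.le (by linarith)
      _ = (n : ℝ) ^ (1 - 3 * e) * (n : ℝ) ^ (1 / 4 - 2 * e) := Real.rpow_add (by linarith) _ _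
      _ ≤ r * (n : ℝ) ^ (1 / 4 - 2 * e) := by gcongr
      _ < r * p := by gcongr; linarith
  exact lt_of_mul_lt_mul_right (mod_cast this : k * p < r * p) p.zero_le

lemma two_mul_rpow_lt_rpow_mul_rpow {n : ℕ} {e ε : ℝ} (hn : 1 < n) (hlarge : 3 ≤ (n : ℝ) ^ e)
    (heε : e ≤ ε / 6) :
    2 * (n : ℝ) ^ (5 / 4 - ε) < (n : ℝ) ^ (1 - 3 * e) * (n : ℝ) ^ (1 / 4 - 2 * e) := by
  have hn₁ : (1 : ℝ) < n := mod_cast hn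
  have hn₀ : (0 : ℝ) < n := by linarith
  calc 2 * (n : ℝ) ^ (5 / 4 - ε) < 3 * (n : ℝ) ^ (5 / 4 - ε) := by gcongr; norm_num
    _ ≤ (n : ℝ) ^ e * (n : ℝ) ^ (5 / 4 - ε) := by gcongr
    _ = (n : ℝ) ^ (e + (5 / 4 - ε)) := (Real.rpow_add hn₀ _ _).symm
    _ ≤ (n : ℝ) ^ (1 - 3 * e + (1 / 4 - 2 * e)) :=
        Real.rpow_le_rpow_of_exponent_le hn₁.le (by linarith)
    _ = (n : ℝ) ^ (1 - 3 * e) * (n : ℝ) ^ (1 / 4 - 2 * e) := Real.rpow_add hn₀ _ _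

/-- The prime `q` is taken just above `p`, and the class of `r` modulo `p * q` makes `p ∣ n - r` and
`q ∣ r - 1`; as `p * q` stays below `√n`, the extended Riemann hypothesis provides `r` near `n`. -/
lemma eventually_exists_partition (erh : ExtendedRiemannHypothesis) {ε : ℝ} (hε : 0 < ε) :
    ∀ᶠ n : ℕ in atTop, ∃ k p r q : ℕ, 0 < k ∧ p.Prime ∧ r.Prime ∧ q.Prime ∧ n = k * p + r ∧
      k < r ∧ p ≤ r ∧ q ∣ r - 1 ∧
      2 * (n : ℝ) ^ (5 / 4 - ε) < (min (r * q) (k * p * (p - 1)) : ℕ) := by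
  obtain ⟨e, he, heε, he'⟩ : ∃ e, 0 < e ∧ e ≤ ε / 6 ∧ e ≤ 1 / 50 :=
    ⟨min (ε / 6) (1 / 50), by positivity, min_le_left _ _, min_le_right _ _⟩
  filter_upwards [eventually_exists_primes_lt_not_dvd he he',
    eventually_exists_prime_modEq erh he (by linarith), eventually_gt_atTop 1,
    eventually_le_natCast_rpow 3 he] with n hprimes hmodEq hn hlarge
  obtain ⟨p, q, hp, hq, hpq, hpn, hpl, hqu⟩ := hprimes
  have hpq' : (p : ℝ) ≤ q := mod_cast hpq.le
  obtain ⟨r, hr, hrn, hrq, hrl, hru⟩ := hmodEq p q hp hq hpq.ne hpn (hpq'.trans hqu) hqu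
  obtain ⟨k, hk⟩ := (Nat.modEq_iff_dvd' (by lia : r ≤ n)).1 hrn
  have hnk : n = k * p + r := by rw [mul_comm k p]; lia
  have hn₁ : (1 : ℝ) < n := mod_cast hn
  have hpr : (p : ℝ) ≤ r := (hpq'.trans hqu).trans
    ((Real.rpow_le_rpow_of_exponent_le hn₁.le (by linarith)).trans hrl)
  have hbound := two_mul_rpow_lt_rpow_mul_rpow hn hlarge heε
  refine ⟨k, p, r, q, Nat.pos_of_ne_zero ?_, hp, hr, hq, hnk,
    lt_of_mul_le_of_rpow_le hn (by linarith) (by lia) hpl hrl, mod_cast hpr,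
    (Nat.modEq_iff_dvd' hr.one_le).1 hrq.symm, ?_⟩
  · rintro rfl
    have := hr.pos
    lia
  push_cast [hp.one_le]
  refine hbound.trans_le (le_min ?_ ?_)
  · gcongr
    linarith
  · have hrkp : (r : ℝ) ≤ k * p := mod_cast (by lia : r ≤ k * p)
    gcongr
    · exact hrl.trans hrkp
    · linarith

end Partition

/-- Assuming ERH, for every `ε > 0`, every nontrivial monotone decreasing graph property
of `n`-vertex graphs with at most `n^{5/4-ε}` edges is evasive for all sufficiently
large `n`. -/
theorem sparse_evasive_of_ERH
    (erh : ExtendedRiemannHypothesis) (ε : ℝ) (hε : 0 < ε) :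
    ∃ N : ℕ, ∀ n : ℕ, N ≤ n → ∀ P : Set (SimpleGraph (Fin n)),
      IsGraphProperty P → MonotoneDecreasing P → P ≠ ∅ → P ≠ Set.univ →
      (∀ G ∈ P, (G.edgeSet.ncard : ℝ) ≤ (n : ℝ) ^ ((5 : ℝ) / 4 - ε)) →
      Evasive P := by
  obtain ⟨N, hN⟩ := Filter.eventually_atTop.1 (eventually_exists_partition erh hε)
  refine ⟨N, fun n hn P hP hmono hne _ hsparse => ?_⟩
  by_contra hev
  obtain ⟨k, p, r, q, hk, hp, hr, hq, hnk, hkr, hpr, hqr, hlt⟩ := hN n hn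
  obtain ⟨G, hG, hmin⟩ := exists_mem_min_le_two_mul_ncard_edgeSet hP hmono
    (Set.nonempty_iff_ne_empty.2 hne) hev hk hp hr hq hnk hkr hpr hqr
  have hmin' : ((min (r * q) (k * p * (p - 1)) : ℕ) : ℝ) ≤ 2 * G.edgeSet.ncard := mod_cast hmin
  linarith [hsparse G hG]
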